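/- arXiv:1003.5072 — 2 statements merged into one kernel-verified Lean document; each statement's English description precedes it below -/
import Mathlib

section
/- Let n ≥ 1, t ≥ 0 and let q₁, q₂ satisfy 0 < q₂ ≤ q₁ < 1 and q₂ − 1 = e^{2t}(q₁ − 1). Then for every measurable function f : ℝ^n → ℝ with 0 < a ≤ f ≤ b for some constants a, b, one has (∫ f^{q₁} dγ)^{1/q₁} ≤ (∫ (N_t f)^{q₂} dγ)^{1/q₂} (reverse hypercontractivity for the Ornstein–Uhlenbeck semigroup). -/
open MeasureTheory Real

noncomputable def gaussianMeasure (n : ℕ) : Measure (EuclideanSpace ℝ (Fin n)) :=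
  volume.withDensity fun x => ENNReal.ofReal ((2 * π) ^ (-(n : ℝ) / 2) * Real.exp (-‖x‖ ^ 2 / 2))

/-- Ornstein-Uhlenbeck semigroup via the Mehler formula. -/
noncomputable def OU (n : ℕ) (t : ℝ) (f : EuclideanSpace ℝ (Fin n) → ℝ)
    (x : EuclideanSpace ℝ (Fin n)) : ℝ :=
  ∫ y, f (Real.exp (-t) • x + Real.sqrt (1 - Real.exp (-2 * t)) • y) ∂(gaussianMeasure n)

/-!
Let `(X, Y)` be a pair of standard Gaussian vectors with correlation `ρ = exp (-t)`. Jensen's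
inequality `B (𝔼 f(X), 𝔼 g(Y)) ≤ 𝔼 B (f(X), g(Y))` holds as soon as the Hessian of `B` with its
mixed entries multiplied by `ρ` is nonnegative: by Taylor's formula it holds up to an error `C δ³`
when `(f, g)` varies on the scale `δ`. Writing a Gaussian vector as `(Z + Z') / √2` with `Z, Z'`
independent copies of it splits the inequality into two inequalities on the scale `δ / √2`, of total
error `2 C (δ / √2)³ = C δ³ / √2`, so that iterating removes the error.

For `B(u, v) = u ^ (1 / p) * v ^ (1 / q)` and `ρ² ≤ (1 - p) (1 - q)` this is Borell's reverse
inequality `‖f‖_p ‖g‖_q ≤ 𝔼 f(X) g(Y) = ∫ N_t f * g`. Its case `p = q₁`, `q = q₂ / (q₂ - 1)`,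
`g = (N_t f) ^ (q₂ - 1)`, the equality case of the reverse Hölder inequality for `N_t f`, is reverse
hypercontractivity.
-/

section Taylor

variable {V : Type*} [NormedAddCommGroup V] [NormedSpace ℝ V]

lemma exists_norm_fderiv_le_of_contDiffOn {W : Type*} [NormedAddCommGroup W] [NormedSpace ℝ W]
    {f : V → W} {U K : Set V} (hf : ContDiffOn ℝ 1 f U) (hU : IsOpen U) (hK : IsCompact K)
    (hKU : K ⊆ U) : ∃ C, 0 ≤ C ∧ ∀ x ∈ K, ‖fderiv ℝ f x‖ ≤ C := by
  obtain ⟨C, hC⟩ := hK.exists_bound_of_continuousOn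
    ((hf.continuousOn_fderiv_of_isOpen hU le_rfl).mono hKU)
  exact ⟨max C 0, le_max_right _ _, fun x hx ↦ (hC x hx).trans (le_max_left _ _)⟩

lemma norm_taylor_two_sub_le {B : V → ℝ} {K : Set V} {C : ℝ} (hC : 0 ≤ C) (hKc : Convex ℝ K)
    (hB : ∀ x ∈ K, ContDiffAt ℝ 2 B x)
    (hLip : ∀ x ∈ K, ∀ y ∈ K,
      ‖fderiv ℝ (fderiv ℝ B) y - fderiv ℝ (fderiv ℝ B) x‖ ≤ C * ‖y - x‖)
    {x y : V} (hx : x ∈ K) (hy : y ∈ K) :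
    ‖B y - B x - fderiv ℝ B x (y - x) - fderiv ℝ (fderiv ℝ B) x (y - x) (y - x) / 2‖ ≤
      C * ‖y - x‖ ^ 3 := by
  set D := fderiv ℝ (fderiv ℝ B) x
  set r := ‖y - x‖ with hr
  have hS : Convex ℝ (K ∩ Metric.closedBall x r) := hKc.inter (convex_closedBall x r)
  have hxS : x ∈ K ∩ Metric.closedBall x r := ⟨hx, Metric.mem_closedBall_self (norm_nonneg _)⟩
  have hyS : y ∈ K ∩ Metric.closedBall x r := ⟨hy, by simp [hr, dist_eq_norm]⟩
  have norm_le {z : V} (hz : z ∈ K ∩ Metric.closedBall x r) : ‖z - x‖ ≤ r := by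
    simpa [dist_eq_norm] using hz.2
  have hfderiv : ∀ z ∈ K ∩ Metric.closedBall x r,
      ‖fderiv ℝ B z - fderiv ℝ B x - D (z - x)‖ ≤ C * r * r := fun z hz ↦
    (hS.norm_image_sub_le_of_norm_fderiv_le' (φ := D)
      (fun w hw ↦ ((hB w hw.1).fderiv_right (m := 1) le_rfl).differentiableAt one_ne_zero)
      (fun w hw ↦ (hLip x hx w hw.1).trans (mul_le_mul_of_nonneg_left (norm_le hw) hC))
      hxS hz).trans (mul_le_mul_of_nonneg_left (norm_le hz) (by positivity))
  have hquad (z : V) : HasFDerivAt (fun z ↦ D (z - x) (z - x) / 2) (D (z - x)) z := by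
    have hsymm : IsSymmSndFDerivAt ℝ B x := (hB x hx).isSymmSndFDerivAt (by simp)
    have hsub : HasFDerivAt (fun z : V ↦ z - x) (ContinuousLinearMap.id ℝ V) z :=
      (hasFDerivAt_id z).sub_const x
    have hmul := ((D.hasFDerivAt.comp z hsub).clm_apply hsub).mul_const (2⁻¹ : ℝ)
    refine hmul.congr_fderiv ?_
    ext v
    have hv : D v (z - x) = D (z - x) v := hsymm.eq v (z - x)
    simp only [map_sub, sub_apply] at hv
    simp only [Function.comp_apply, map_sub, ContinuousLinearMap.comp_id, smul_add, add_apply,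
      smul_apply, sub_apply, smul_eq_mul, ContinuousLinearMap.flip_apply]
    linarith
  have hremainder := hS.norm_image_sub_le_of_norm_hasFDerivWithin_le'
    (f := fun z ↦ B z - D (z - x) (z - x) / 2) (φ := fderiv ℝ B x)
    (fun z hz ↦ ((((hB z hz.1).differentiableAt two_ne_zero).hasFDerivAt).sub
      (hquad z)).hasFDerivWithinAt)
    (fun z hz ↦ by rw [sub_right_comm]; exact hfderiv z hz) hxS hyS
  refine (congrArg norm ?_).trans_le (hremainder.trans_eq (by ring))
  simp only [map_sub, sub_apply, sub_self, map_zero, zero_div, sub_zero]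
  ring

lemma exists_norm_taylor_two_sub_le_of_contDiffOn {B : V → ℝ} {U K : Set V}
    (hB : ContDiffOn ℝ 3 B U) (hU : IsOpen U) (hK : IsCompact K) (hKc : Convex ℝ K)
    (hKU : K ⊆ U) :
    ∃ C, 0 ≤ C ∧ ∀ x ∈ K, ∀ y ∈ K,
      ‖B y - B x - fderiv ℝ B x (y - x) - fderiv ℝ (fderiv ℝ B) x (y - x) (y - x) / 2‖ ≤
        C * ‖y - x‖ ^ 3 := by
  have hB' : ContDiffOn ℝ 1 (fderiv ℝ (fderiv ℝ B)) U :=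
    (hB.fderiv_of_isOpen (m := 2) hU (by norm_num)).fderiv_of_isOpen hU (by norm_num)
  obtain ⟨C, hC, hbound⟩ := exists_norm_fderiv_le_of_contDiffOn hB' hU hK hKU
  refine ⟨C, hC, fun x hx y hy ↦ norm_taylor_two_sub_le hC hKc
    (fun z hz ↦ (hB.contDiffAt (hU.mem_nhds (hKU hz))).of_le (by norm_num))
    (fun z hz w hw ↦ ?_) hx hy⟩
  exact hKc.norm_image_sub_le_of_norm_fderiv_le
    (fun z hz ↦ (hB'.differentiableOn one_ne_zero).differentiableAt (hU.mem_nhds (hKU hz)))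
    hbound hz hw

end Taylor

lemma integrable_comp_of_continuousOn_of_isCompact {X Y F : Type*} [TopologicalSpace X]
    [TopologicalSpace Y] [MeasurableSpace X] [OpensMeasurableSpace X]
    [SecondCountableTopology X] {m : Measure X} [IsFiniteMeasure m] [NormedAddCommGroup F]
    {K : Set Y} {g : Y → F} {h : X → Y} (hg : ContinuousOn g K) (hK : IsCompact K)
    (hh : Continuous h) (hmem : ∀ x, h x ∈ K) :
    Integrable (fun x ↦ g (h x)) m := by
  obtain ⟨C, hC⟩ := hK.exists_bound_of_continuousOn hg
  exact .of_bound (hg.comp_continuous hh hmem).aestronglyMeasurable C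
    (.of_forall fun x ↦ hC _ (hmem x))

section Smooth

variable {V W : Type*} [NormedAddCommGroup V] [NormedSpace ℝ V]
  [NormedAddCommGroup W] [NormedSpace ℝ W]
  {B : V → ℝ} {K : Set V} {𝓛 : Submodule ℝ (W →L[ℝ] V)} {δ : ℝ} {Φ : W → V}

/-- Maps into `K` whose derivatives lie in the space `𝓛` of linear maps, have norm at most `δ`, and
are `δ ^ 2`-Lipschitz: the class is preserved when `Φ` is replaced by `Φ (c • ·)` and `δ` by
`c * δ`. -/
structure IsSmoothWith (K : Set V) (𝓛 : Submodule ℝ (W →L[ℝ] V)) (δ : ℝ) (Φ : W → V) : Prop where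
  differentiable : Differentiable ℝ Φ
  mem : ∀ x, Φ x ∈ K
  fderiv_mem : ∀ x, fderiv ℝ Φ x ∈ 𝓛
  norm_fderiv_le : ∀ x, ‖fderiv ℝ Φ x‖ ≤ δ
  norm_fderiv_sub_le : ∀ x y, ‖fderiv ℝ Φ x - fderiv ℝ Φ y‖ ≤ δ ^ 2 * ‖x - y‖

namespace IsSmoothWith

lemma comp_smul (hΦ : IsSmoothWith K 𝓛 δ Φ) {c : ℝ} (hc : 0 ≤ c) :
    IsSmoothWith K 𝓛 (c * δ) fun x ↦ Φ (c • x) where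
  differentiable := hΦ.differentiable.comp (differentiable_id.const_smul c)
  mem x := hΦ.mem _
  fderiv_mem x := by
    rw [fderiv_comp_smul]
    exact 𝓛.smul_mem _ (hΦ.fderiv_mem _)
  norm_fderiv_le x := by
    rw [fderiv_comp_smul, norm_smul, norm_of_nonneg hc]
    exact mul_le_mul_of_nonneg_left (hΦ.norm_fderiv_le _) hc
  norm_fderiv_sub_le x y := by
    rw [fderiv_comp_smul, fderiv_comp_smul, ← smul_sub, norm_smul, norm_of_nonneg hc]
    calc c * ‖fderiv ℝ Φ (c • x) - fderiv ℝ Φ (c • y)‖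
        ≤ c * (δ ^ 2 * ‖c • x - c • y‖) :=
          mul_le_mul_of_nonneg_left (hΦ.norm_fderiv_sub_le _ _) hc
      _ = (c * δ) ^ 2 * ‖x - y‖ := by
          rw [← smul_sub, norm_smul, norm_of_nonneg hc]
          ring

lemma comp_const_add (hΦ : IsSmoothWith K 𝓛 δ Φ) (a : W) :
    IsSmoothWith K 𝓛 δ fun x ↦ Φ (a + x) where
  differentiable := hΦ.differentiable.comp (differentiable_id.const_add a)
  mem x := hΦ.mem _
  fderiv_mem x := by
    rw [fderiv_comp_add_left]
    exact hΦ.fderiv_mem _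
  norm_fderiv_le x := by
    rw [fderiv_comp_add_left]
    exact hΦ.norm_fderiv_le _
  norm_fderiv_sub_le x y := by
    simpa only [fderiv_comp_add_left, add_sub_add_left_eq_sub] using
      hΦ.norm_fderiv_sub_le (a + x) (a + y)

lemma continuous_fderiv (hΦ : IsSmoothWith K 𝓛 δ Φ) : Continuous (fderiv ℝ Φ) :=
  (LipschitzWith.of_dist_le_mul (K := ⟨δ ^ 2, sq_nonneg δ⟩) fun x y ↦ by
    simpa only [dist_eq_norm] using! hΦ.norm_fderiv_sub_le x y).continuous

lemma norm_sub_apply_zero_le (hΦ : IsSmoothWith K 𝓛 δ Φ) (x : W) :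
    ‖Φ x - Φ 0‖ ≤ δ * ‖x‖ := by
  simpa only [sub_zero] using convex_univ.norm_image_sub_le_of_norm_fderiv_le
    (fun y _ ↦ hΦ.differentiable y) (fun y _ ↦ hΦ.norm_fderiv_le y)
    (Set.mem_univ (0 : W)) (Set.mem_univ x)

lemma norm_sub_fderiv_zero_le (hΦ : IsSmoothWith K 𝓛 δ Φ) (x : W) :
    ‖Φ x - Φ 0 - fderiv ℝ Φ 0 x‖ ≤ δ ^ 2 * ‖x‖ ^ 2 := by
  have h := (convex_closedBall (0 : W) ‖x‖).norm_image_sub_le_of_norm_fderiv_le'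
    (φ := fderiv ℝ Φ 0) (C := δ ^ 2 * ‖x‖) (fun y _ ↦ hΦ.differentiable y)
    (fun y hy ↦ (hΦ.norm_fderiv_sub_le y 0).trans (mul_le_mul_of_nonneg_left
      (by simpa using hy) (sq_nonneg δ)))
    (Metric.mem_closedBall_self (norm_nonneg x)) (by simp : x ∈ Metric.closedBall 0 ‖x‖)
  simpa only [sub_zero, mul_assoc, ← sq] using h

end IsSmoothWith

lemma bilin_apply_self_sub_le {D : V →L[ℝ] V →L[ℝ] ℝ} {M τ : ℝ} (hD : ‖D‖ ≤ M)
    {x l : V} (hx : ‖x‖ ≤ τ) (hl : ‖l‖ ≤ τ) (hxl : ‖x - l‖ ≤ τ ^ 2) :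
    D l l - D x x ≤ 2 * M * τ ^ 3 := by
  have h₁ : ‖D (x - l) x‖ ≤ M * τ ^ 2 * τ :=
    D.le_of_opNorm₂_le_of_le hD hxl hx |>.trans_eq (by ring)
  have h₂ : ‖D l (x - l)‖ ≤ M * τ * τ ^ 2 :=
    D.le_of_opNorm₂_le_of_le hD hl hxl |>.trans_eq (by ring)
  rw [Real.norm_eq_abs] at h₁ h₂
  have hsplit : D l l - D x x = -D (x - l) x - D l (x - l) := by
    simp
  linarith [neg_abs_le (D (x - l) x), neg_abs_le (D l (x - l))]

lemma add_fderiv_add_fderiv_fderiv_sub_le {C M τ : ℝ} {v x l : V} (hC : 0 ≤ C)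
    (hM : ‖fderiv ℝ (fderiv ℝ B) v‖ ≤ M)
    (hB : ‖B x - B v - fderiv ℝ B v (x - v) - fderiv ℝ (fderiv ℝ B) v (x - v) (x - v) / 2‖ ≤
      C * ‖x - v‖ ^ 3)
    (hx : ‖x - v‖ ≤ τ) (hl : ‖l‖ ≤ τ) (hxl : ‖x - v - l‖ ≤ τ ^ 2) :
    B v + fderiv ℝ B v (x - v) + fderiv ℝ (fderiv ℝ B) v l l / 2 - (C + M) * τ ^ 3 ≤ B x := by
  have hquad := bilin_apply_self_sub_le hM hx hl hxl
  have hcube : C * ‖x - v‖ ^ 3 ≤ C * τ ^ 3 := by gcongr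
  rw [Real.norm_eq_abs] at hB
  linarith [neg_abs_le (B x - B v - fderiv ℝ B v (x - v) -
    fderiv ℝ (fderiv ℝ B) v (x - v) (x - v) / 2)]

variable [MeasurableSpace W] [BorelSpace W] {m : Measure W}

lemma integrable_bilin_apply_self (hm : MemLp id 2 m) (D : V →L[ℝ] V →L[ℝ] ℝ)
    (L : W →L[ℝ] V) : Integrable (fun w ↦ D (L w) (L w)) m := by
  refine ((hm.integrable_norm_pow two_ne_zero).const_mul (‖D‖ * ‖L‖ ^ 2)).mono' ?_
    (.of_forall fun w ↦ ?_)
  · exact (show Continuous fun w : W ↦ D (L w) (L w) by fun_prop).aestronglyMeasurable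
  · exact (D.le_of_opNorm₂_le_of_le le_rfl (L.le_opNorm w) (L.le_opNorm w)).trans_eq
      (by simp only [id_eq]; ring)

variable [IsProbabilityMeasure m]

lemma le_integral_add_integral_of_forall_le [CompleteSpace V] (hm : MemLp id 2 m) {c : ℝ}
    {ℓ : V →L[ℝ] ℝ} {D : V →L[ℝ] V →L[ℝ] ℝ} {L : W →L[ℝ] V} {g h : W → ℝ} (hΦ : Integrable Φ m)
    (hg : Integrable g m) (hh : Integrable h m) (hD : 0 ≤ ∫ w, D (L w) (L w) ∂m)
    (hle : ∀ w, c + ℓ (Φ w - ∫ w, Φ w ∂m) + D (L w) (L w) / 2 - h w ≤ g w) :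
    c ≤ (∫ w, g w ∂m) + ∫ w, h w ∂m := by
  have hcenter : Integrable (fun w ↦ Φ w - ∫ w, Φ w ∂m) m := hΦ.sub (integrable_const _)
  have hℓ : ∫ w, ℓ (Φ w - ∫ w, Φ w ∂m) ∂m = 0 := by
    rw [ℓ.integral_comp_comm hcenter, integral_sub hΦ (integrable_const _)]
    simp
  have hD' : Integrable (fun w ↦ D (L w) (L w) / 2) m :=
    (integrable_bilin_apply_self hm D L).div_const 2
  have hcℓ : Integrable (fun w ↦ c + ℓ (Φ w - ∫ w, Φ w ∂m)) m :=
    (integrable_const c).add (ℓ.integrable_comp hcenter)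
  have hmono : ∫ w, (c + ℓ (Φ w - ∫ w, Φ w ∂m) + D (L w) (L w) / 2) ∂m ≤ ∫ w, (g w + h w) ∂m :=
    integral_mono (hcℓ.add hD') (hg.add hh) fun w ↦ by linarith [hle w]
  rw [integral_add hcℓ hD',
    integral_add (integrable_const c) (ℓ.integrable_comp hcenter), hℓ, integral_div,
    integral_add hg hh] at hmono
  simp only [integral_const, probReal_univ, one_smul] at hmono
  linarith

variable [SecondCountableTopology W]

namespace IsSmoothWith

lemma integrable (hΦ : IsSmoothWith K 𝓛 δ Φ) (hK : IsCompact K) : Integrable Φ m :=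
  integrable_comp_of_continuousOn_of_isCompact (g := id) continuousOn_id hK
    hΦ.differentiable.continuous hΦ.mem

lemma integrable_fderiv_add (hΦ : IsSmoothWith K 𝓛 δ Φ) (x : W) :
    Integrable (fun w ↦ fderiv ℝ Φ (x + w)) m :=
  .of_bound (hΦ.continuous_fderiv.comp (continuous_const_add x)).aestronglyMeasurable δ
    (.of_forall fun w ↦ hΦ.norm_fderiv_le (x + w))

lemma hasFDerivAt_integral_comp_add (hΦ : IsSmoothWith K 𝓛 δ Φ) (hK : IsCompact K) (x : W) :
    HasFDerivAt (fun x ↦ ∫ w, Φ (x + w) ∂m) (∫ w, fderiv ℝ Φ (x + w) ∂m) x :=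
  hasFDerivAt_integral_of_dominated_of_fderiv_le (F := fun x w ↦ Φ (x + w))
    (F' := fun x w ↦ fderiv ℝ Φ (x + w)) Filter.univ_mem
    (.of_forall fun x ↦ ((hΦ.comp_const_add x).differentiable.continuous).aestronglyMeasurable)
    ((hΦ.comp_const_add x).integrable hK)
    (hΦ.continuous_fderiv.comp (continuous_const_add x)).aestronglyMeasurable
    (.of_forall fun w y _ ↦ hΦ.norm_fderiv_le (y + w)) (integrable_const δ)
    (.of_forall fun w y _ ↦
      (hasFDerivAt_comp_add_right w).2 (hΦ.differentiable (y + w)).hasFDerivAt)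

variable [CompleteSpace V]

lemma integral_comp_add (hΦ : IsSmoothWith K 𝓛 δ Φ) (hK : IsCompact K)
    (hKc : Convex ℝ K) (h𝓛 : IsClosed (𝓛 : Set (W →L[ℝ] V))) :
    IsSmoothWith K 𝓛 δ fun x ↦ ∫ w, Φ (x + w) ∂m where
  differentiable x := (hΦ.hasFDerivAt_integral_comp_add hK x).differentiableAt
  mem x := hKc.integral_mem hK.isClosed (.of_forall fun w ↦ hΦ.mem (x + w))
    ((hΦ.comp_const_add x).integrable hK)
  fderiv_mem x := by
    rw [(hΦ.hasFDerivAt_integral_comp_add hK x).fderiv]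
    exact 𝓛.convex.integral_mem h𝓛 (.of_forall fun w ↦ hΦ.fderiv_mem (x + w))
      (hΦ.integrable_fderiv_add x)
  norm_fderiv_le x := by
    rw [(hΦ.hasFDerivAt_integral_comp_add hK x).fderiv]
    simpa using norm_integral_le_of_norm_le_const (μ := m)
      (.of_forall fun w ↦ hΦ.norm_fderiv_le (x + w))
  norm_fderiv_sub_le x y := by
    rw [(hΦ.hasFDerivAt_integral_comp_add hK x).fderiv,
      (hΦ.hasFDerivAt_integral_comp_add hK y).fderiv,
      ← integral_sub (hΦ.integrable_fderiv_add x) (hΦ.integrable_fderiv_add y)]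
    simpa using norm_integral_le_of_norm_le_const (μ := m) (C := δ ^ 2 * ‖x - y‖)
      (.of_forall fun w ↦ by simpa using hΦ.norm_fderiv_sub_le (x + w) (y + w))

lemma norm_integral_sub_apply_zero_le (hΦ : IsSmoothWith K 𝓛 δ Φ) (hK : IsCompact K)
    (hm : MemLp id 1 m) : ‖(∫ w, Φ w ∂m) - Φ 0‖ ≤ δ * ∫ w, ‖w‖ ∂m := by
  have hmean : (∫ w, Φ w ∂m) - Φ 0 = ∫ w, (Φ w - Φ 0) ∂m := by
    simp [integral_sub (hΦ.integrable hK) (integrable_const _)]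
  rw [hmean, ← integral_const_mul]
  exact norm_integral_le_of_norm_le ((hm.integrable le_rfl).norm.const_mul δ)
    (.of_forall hΦ.norm_sub_apply_zero_le)

lemma norm_integral_sub_apply_zero_le_sq [CompleteSpace W] (hΦ : IsSmoothWith K 𝓛 δ Φ)
    (hK : IsCompact K) (hm : MemLp id 2 m) (hm₀ : ∫ w, w ∂m = 0) :
    ‖(∫ w, Φ w ∂m) - Φ 0‖ ≤ δ ^ 2 * ∫ w, ‖w‖ ^ 2 ∂m := by
  have hid : Integrable (fun w : W ↦ w) m := hm.integrable one_le_two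
  have hlin : Integrable (fun w ↦ fderiv ℝ Φ 0 w) m := (fderiv ℝ Φ 0).integrable_comp hid
  have hmean : (∫ w, Φ w ∂m) - Φ 0 = ∫ w, (Φ w - Φ 0 - fderiv ℝ Φ 0 w) ∂m := by
    rw [integral_sub (f := fun w ↦ Φ w - Φ 0) ((hΦ.integrable hK).sub (integrable_const _)) hlin,
      integral_sub (hΦ.integrable hK) (integrable_const _),
      (fderiv ℝ Φ 0).integral_comp_comm hid, hm₀]
    simp
  rw [hmean, ← integral_const_mul]
  exact norm_integral_le_of_norm_le ((hm.integrable_norm_pow two_ne_zero).const_mul _)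
    (.of_forall hΦ.norm_sub_fderiv_zero_le)

lemma exists_linear_approx_integral [CompleteSpace W] (hK : IsCompact K)
    (hm : MemLp id 2 m) (hm₀ : ∫ w, w ∂m = 0) :
    ∃ R, 0 ≤ R ∧ ∀ ⦃δ Φ⦄, IsSmoothWith K 𝓛 δ Φ → ∀ x, ‖Φ x - ∫ w, Φ w ∂m‖ ≤ δ * (‖x‖ + R) ∧
      ‖Φ x - ∫ w, Φ w ∂m - fderiv ℝ Φ 0 x‖ ≤ (δ * (‖x‖ + R)) ^ 2 := by
  have hM₁ : 0 ≤ ∫ w, ‖w‖ ∂m := integral_nonneg fun w ↦ norm_nonneg w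
  have hM₂ : 0 ≤ ∫ w, ‖w‖ ^ 2 ∂m := integral_nonneg fun w ↦ by positivity
  refine ⟨1 + (∫ w, ‖w‖ ∂m) + ∫ w, ‖w‖ ^ 2 ∂m, by positivity, fun δ Φ hΦ x ↦ ?_⟩
  have hfirst := hΦ.norm_integral_sub_apply_zero_le hK (hm.mono_exponent one_le_two)
  have hsecond := hΦ.norm_integral_sub_apply_zero_le_sq hK hm hm₀
  set M₁ := ∫ w, ‖w‖ ∂m
  set M₂ := ∫ w, ‖w‖ ^ 2 ∂m
  have hδ : 0 ≤ δ := (norm_nonneg _).trans (hΦ.norm_fderiv_le 0)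
  constructor
  · calc ‖Φ x - ∫ w, Φ w ∂m‖ = ‖Φ x - Φ 0 - ((∫ w, Φ w ∂m) - Φ 0)‖ := by
          rw [sub_sub_sub_cancel_right]
      _ ≤ δ * ‖x‖ + δ * M₁ :=
          (norm_sub_le _ _).trans (add_le_add (hΦ.norm_sub_apply_zero_le x) hfirst)
      _ ≤ δ * (‖x‖ + (1 + M₁ + M₂)) := by nlinarith
  · calc ‖Φ x - ∫ w, Φ w ∂m - fderiv ℝ Φ 0 x‖
        = ‖Φ x - Φ 0 - fderiv ℝ Φ 0 x - ((∫ w, Φ w ∂m) - Φ 0)‖ := by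
          congr 1
          abel
      _ ≤ δ ^ 2 * ‖x‖ ^ 2 + δ ^ 2 * M₂ :=
          (norm_sub_le _ _).trans (add_le_add (hΦ.norm_sub_fderiv_zero_le x) hsecond)
      _ = δ ^ 2 * (‖x‖ ^ 2 + M₂) := by ring
      _ ≤ δ ^ 2 * (‖x‖ + (1 + M₁ + M₂)) ^ 2 := by
          gcongr
          nlinarith [norm_nonneg x, mul_nonneg (norm_nonneg x) (add_nonneg hM₁ hM₂)]
      _ = (δ * (‖x‖ + (1 + M₁ + M₂))) ^ 2 := by ring

end IsSmoothWith

/-- The inequality `B (∫ Φ) ≤ ∫ B ∘ Φ` up to an error `C * δ ^ 3`, where `δ` is the scale on which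
`Φ` is smooth. -/
def JensenUpTo (m : Measure W) (B : V → ℝ) (K : Set V) (𝓛 : Submodule ℝ (W →L[ℝ] V))
    (C : ℝ) : Prop :=
  ∀ ⦃δ Φ⦄, IsSmoothWith K 𝓛 δ Φ → B (∫ w, Φ w ∂m) ≤ (∫ w, B (Φ w) ∂m) + C * δ ^ 3

lemma exists_jensenUpTo [CompleteSpace V] [CompleteSpace W] {U : Set V}
    (hB : ContDiffOn ℝ 3 B U) (hU : IsOpen U) (hK : IsCompact K) (hKc : Convex ℝ K)
    (hKU : K ⊆ U) (hm : MemLp id 3 m) (hm₀ : ∫ w, w ∂m = 0)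
    (hpos : ∀ v ∈ K, ∀ L ∈ 𝓛, 0 ≤ ∫ w, fderiv ℝ (fderiv ℝ B) v (L w) (L w) ∂m) :
    ∃ C, JensenUpTo m B K 𝓛 C := by
  obtain ⟨C, hC₀, hC⟩ := exists_norm_taylor_two_sub_le_of_contDiffOn hB hU hK hKc hKU
  obtain ⟨M, -, hM⟩ := exists_norm_fderiv_le_of_contDiffOn (f := fderiv ℝ B)
    (hB.fderiv_of_isOpen hU (by norm_num)) hU hK hKU
  have hm₂ : MemLp id 2 m := hm.mono_exponent (by norm_num)
  obtain ⟨R, hR, happrox⟩ := IsSmoothWith.exists_linear_approx_integral (𝓛 := 𝓛) hK hm₂ hm₀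
  have hT : Integrable (fun w : W ↦ (‖w‖ + R) ^ 3) m := by
    refine (hm.norm.add (memLp_const R)).integrable_norm_pow' |>.congr (.of_forall fun w ↦ ?_)
    simp [abs_of_nonneg (add_nonneg (norm_nonneg w) hR)]
  refine ⟨(C + M) * ∫ w, (‖w‖ + R) ^ 3 ∂m, fun δ Φ hΦ ↦ ?_⟩
  have hδ : 0 ≤ δ := (norm_nonneg _).trans (hΦ.norm_fderiv_le 0)
  have hv : ∫ w, Φ w ∂m ∈ K :=
    hKc.integral_mem hK.isClosed (.of_forall hΦ.mem) (hΦ.integrable hK)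
  have hBΦ : Integrable (fun w ↦ B (Φ w)) m := integrable_comp_of_continuousOn_of_isCompact
    (hB.continuousOn.mono hKU) hK hΦ.differentiable.continuous hΦ.mem
  calc B (∫ w, Φ w ∂m) ≤ (∫ w, B (Φ w) ∂m) + ∫ w, (C + M) * δ ^ 3 * (‖w‖ + R) ^ 3 ∂m := by
        refine le_integral_add_integral_of_forall_le (ℓ := fderiv ℝ B (∫ w, Φ w ∂m)) hm₂
          (hΦ.integrable hK) hBΦ (hT.const_mul _) (hpos _ hv _ (hΦ.fderiv_mem 0)) fun w ↦ ?_
        have hlin : ‖fderiv ℝ Φ 0 w‖ ≤ δ * (‖w‖ + R) :=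
          ((fderiv ℝ Φ 0).le_of_opNorm_le (hΦ.norm_fderiv_le 0) w).trans
            (mul_le_mul_of_nonneg_left (le_add_of_nonneg_right hR) hδ)
        simpa only [mul_pow, mul_assoc] using add_fderiv_add_fderiv_fderiv_sub_le hC₀ (hM _ hv)
          (hC _ hv _ (hΦ.mem w)) (happrox hΦ w).1 hlin (happrox hΦ w).2
    _ = (∫ w, B (Φ w) ∂m) + (C + M) * (∫ w, (‖w‖ + R) ^ 3 ∂m) * δ ^ 3 := by
        rw [integral_const_mul]
        ring

end Smooth

section Doubling

variable {V W : Type*} [NormedAddCommGroup V] [NormedSpace ℝ V] [CompleteSpace V]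
  [NormedAddCommGroup W] [NormedSpace ℝ W] [CompleteSpace W]
  [MeasurableSpace W] [BorelSpace W] [SecondCountableTopology W]
  {B : V → ℝ} {K : Set V} {𝓛 : Submodule ℝ (W →L[ℝ] V)} {m : Measure W}
  [ProbabilityTheory.IsGaussian m]

lemma measurePreserving_cos_smul_add_sin_smul (hm : ∫ w, w ∂m = 0) (θ : ℝ) :
    MeasurePreserving (fun z : W × W ↦ cos θ • z.1 + sin θ • z.2) (m.prod m) m := by
  have hrot : MeasurePreserving (ContinuousLinearMap.rotation (E := W) θ) (m.prod m) (m.prod m) :=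
    ⟨by fun_prop, ProbabilityTheory.IsGaussian.map_rotation_eq_self hm θ⟩
  convert! measurePreserving_fst.comp hrot using 1

lemma integral_eq_integral_integral_smul_add (hm : ∫ w, w ∂m = 0) {F : Type*}
    [NormedAddCommGroup F] [NormedSpace ℝ F] {g : W → F} (hg : Continuous g)
    (hgi : Integrable g m) :
    ∫ w, g w ∂m = ∫ w, ∫ w', g ((√2 / 2) • (w + w')) ∂m ∂m := by
  have hmp := measurePreserving_cos_smul_add_sin_smul hm (π / 4)
  have hint : Integrable (fun z : W × W ↦ g ((√2 / 2) • (z.1 + z.2))) (m.prod m) := by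
    simpa [Function.comp_def, ← smul_add] using (hmp.integrable_comp hgi.aestronglyMeasurable).2 hgi
  rw [← integral_prod _ hint]
  conv_lhs => rw [← hmp.map_eq, integral_map hmp.aemeasurable hg.aestronglyMeasurable]
  simp [← smul_add]

lemma JensenUpTo.mul_sqrt_two_div_two {C : ℝ} (hC : JensenUpTo m B K 𝓛 C)
    (hB : ContinuousOn B K) (hK : IsCompact K) (hKc : Convex ℝ K)
    (h𝓛 : IsClosed (𝓛 : Set (W →L[ℝ] V))) (hm : ∫ w, w ∂m = 0) :
    JensenUpTo m B K 𝓛 (C * (√2 / 2)) := by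
  intro δ Φ hΦ
  have hΦc : Continuous Φ := hΦ.differentiable.continuous
  have hBΦ {X : Type _} [TopologicalSpace X] [MeasurableSpace X] [OpensMeasurableSpace X]
      [SecondCountableTopology X] {μ : Measure X} [IsFiniteMeasure μ] {h : X → W}
      (hh : Continuous h) : Integrable (fun x ↦ B (Φ (h x))) μ :=
    integrable_comp_of_continuousOn_of_isCompact hB hK (hΦc.comp hh) fun x ↦ hΦ.mem _
  have hΨ := hΦ.comp_smul (c := √2 / 2) (by positivity)
  have hmean := hΨ.integral_comp_add (m := m) hK hKc h𝓛
  have hcube : C * (√2 / 2 * δ) ^ 3 = C * (√2 / 2) * δ ^ 3 / 2 := by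
    rw [mul_pow, pow_succ (√2 / 2), div_pow, sq_sqrt zero_le_two]
    ring
  have hinner : Integrable (fun w ↦ ∫ w', B (Φ ((√2 / 2) • (w + w'))) ∂m) m :=
    (hBΦ (μ := m.prod m) (h := fun z ↦ (√2 / 2) • (z.1 + z.2)) (by fun_prop)).integral_prod_left
  calc B (∫ w, Φ w ∂m) = B (∫ w, ∫ w', Φ ((√2 / 2) • (w + w')) ∂m ∂m) := by
        rw [integral_eq_integral_integral_smul_add hm hΦc (hΦ.integrable hK)]
    _ ≤ (∫ w, B (∫ w', Φ ((√2 / 2) • (w + w')) ∂m) ∂m) + C * (√2 / 2 * δ) ^ 3 := hC hmean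
    _ ≤ (∫ w, ((∫ w', B (Φ ((√2 / 2) • (w + w'))) ∂m) + C * (√2 / 2 * δ) ^ 3) ∂m) +
          C * (√2 / 2 * δ) ^ 3 := by
        gcongr
        · exact integrable_comp_of_continuousOn_of_isCompact hB hK
            hmean.differentiable.continuous hmean.mem
        · exact hinner.add (integrable_const _)
        · exact fun w ↦ hC (hΨ.comp_const_add w)
    _ = (∫ w, B (Φ w) ∂m) + C * (√2 / 2) * δ ^ 3 := by
        rw [integral_add hinner (integrable_const _), hcube,
          integral_eq_integral_integral_smul_add hm (g := fun w ↦ B (Φ w))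
            (hB.comp_continuous hΦc hΦ.mem) (hBΦ continuous_id)]
        simp only [integral_const, probReal_univ, one_smul]
        ring

theorem le_integral_comp_of_isSmoothWith {U : Set V} (hB : ContDiffOn ℝ 3 B U)
    (hU : IsOpen U) (hK : IsCompact K) (hKc : Convex ℝ K) (hKU : K ⊆ U)
    (h𝓛 : IsClosed (𝓛 : Set (W →L[ℝ] V))) (hm : ∫ w, w ∂m = 0)
    (hpos : ∀ v ∈ K, ∀ L ∈ 𝓛, 0 ≤ ∫ w, fderiv ℝ (fderiv ℝ B) v (L w) (L w) ∂m)
    {δ : ℝ} {Φ : W → V} (hΦ : IsSmoothWith K 𝓛 δ Φ) :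
    B (∫ w, Φ w ∂m) ≤ ∫ w, B (Φ w) ∂m := by
  obtain ⟨C, hC⟩ := exists_jensenUpTo hB hU hK hKc hKU
    (ProbabilityTheory.IsGaussian.memLp_id m 3 (by simp)) hm hpos
  have hiter (k : ℕ) : JensenUpTo m B K 𝓛 (C * (√2 / 2) ^ k) := by
    induction k with
    | zero => simpa using hC
    | succ k ih =>
      simpa only [pow_succ, mul_assoc] using
        ih.mul_sqrt_two_div_two (hB.continuousOn.mono hKU) hK hKc h𝓛 hm
  have hlt : √2 / 2 < 1 := by
    rw [div_lt_one two_pos, sqrt_lt' two_pos]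
    norm_num
  have hlim := (((tendsto_pow_atTop_nhds_zero_of_lt_one (by positivity) hlt).const_mul
    C).mul_const (δ ^ 3)).const_add (∫ w, B (Φ w) ∂m)
  simpa using ge_of_tendsto' hlim fun k ↦ hiter k hΦ

end Doubling

section CorrelatedPair

variable {E W : Type*} [NormedAddCommGroup E] [NormedSpace ℝ E] [NormedAddCommGroup W]
  [NormedSpace ℝ W]

/-- The space of linear maps `w ↦ (p (X w), q (Y w))`, in which the derivatives of
`w ↦ (f (X w), g (Y w))` lie. -/
def splitMaps (X Y : W →L[ℝ] E) : Submodule ℝ (W →L[ℝ] ℝ × ℝ) where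
  carrier := {L | ∃ p q : StrongDual ℝ E, L = (p.comp X).prod (q.comp Y)}
  zero_mem' := ⟨0, 0, by ext <;> simp⟩
  add_mem' := by
    rintro _ _ ⟨p, q, rfl⟩ ⟨p', q', rfl⟩
    exact ⟨p + p', q + q', by ext <;> simp⟩
  smul_mem' := by
    rintro c _ ⟨p, q, rfl⟩
    exact ⟨c • p, c • q, by ext <;> simp⟩

lemma isClosed_splitMaps [FiniteDimensional ℝ W] (X Y : W →L[ℝ] E) :
    IsClosed (splitMaps X Y : Set (W →L[ℝ] ℝ × ℝ)) :=
  (splitMaps X Y).closed_of_finiteDimensional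

lemma hasFDerivAt_prodMk_comp {f g : E → ℝ} (hf : Differentiable ℝ f) (hg : Differentiable ℝ g)
    (X Y : W →L[ℝ] E) (w : W) :
    HasFDerivAt (fun w ↦ (f (X w), g (Y w)))
      (((fderiv ℝ f (X w)).comp X).prod ((fderiv ℝ g (Y w)).comp Y)) w :=
  ((hf (X w)).hasFDerivAt.comp w X.hasFDerivAt).prodMk
    ((hg (Y w)).hasFDerivAt.comp w Y.hasFDerivAt)

lemma exists_isSmoothWith_of_lipschitzWith {V : Type*} [NormedAddCommGroup V] [NormedSpace ℝ V]
    {K : Set V} {𝓛 : Submodule ℝ (W →L[ℝ] V)} {Φ : W → V} {M : ℝ} {N : NNReal}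
    (hΦ : Differentiable ℝ Φ) (hK : ∀ x, Φ x ∈ K) (h𝓛 : ∀ x, fderiv ℝ Φ x ∈ 𝓛)
    (hM : ∀ x, ‖fderiv ℝ Φ x‖ ≤ M) (hN : LipschitzWith N (fderiv ℝ Φ)) :
    ∃ δ, IsSmoothWith K 𝓛 δ Φ := by
  have hM₀ : 0 ≤ M := (norm_nonneg _).trans (hM 0)
  refine ⟨1 + M + N, hΦ, hK, h𝓛, fun x ↦ (hM x).trans ?_, fun x y ↦ ?_⟩
  · linarith [N.coe_nonneg]
  · refine (hN.norm_sub_le x y).trans ?_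
    gcongr
    nlinarith [N.coe_nonneg]

lemma exists_isSmoothWith_prodMk_comp {f g : E → ℝ} (hf : ContDiff ℝ 2 f)
    (hf' : HasCompactSupport (fderiv ℝ f)) (hg : ContDiff ℝ 2 g)
    (hg' : HasCompactSupport (fderiv ℝ g)) {A A' : Set ℝ} (hA : ∀ x, f x ∈ A)
    (hA' : ∀ x, g x ∈ A') (X Y : W →L[ℝ] E) :
    ∃ δ, IsSmoothWith (A ×ˢ A') (splitMaps X Y) δ fun w ↦ (f (X w), g (Y w)) := by
  have hderiv := hasFDerivAt_prodMk_comp (hf.differentiable two_ne_zero)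
    (hg.differentiable two_ne_zero) X Y
  have hfderiv : fderiv ℝ (fun w ↦ (f (X w), g (Y w))) = fun w ↦
      ((fderiv ℝ f (X w)).comp X).prod ((fderiv ℝ g (Y w)).comp Y) :=
    funext fun w ↦ (hderiv w).fderiv
  have lipschitz {h : E → ℝ} (hh : ContDiff ℝ 2 h) (hh' : HasCompactSupport (fderiv ℝ h))
      (Z : W →L[ℝ] E) : ∃ N, LipschitzWith N fun w ↦ (fderiv ℝ h (Z w)).comp Z := by
    obtain ⟨N, hN⟩ := ContDiff.lipschitzWith_of_hasCompactSupport hh'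
      (hh.fderiv_right (m := 1) le_rfl) one_ne_zero
    exact ⟨_, ((ContinuousLinearMap.compL ℝ W E ℝ).flip Z).lipschitz.comp (hN.comp Z.lipschitz)⟩
  have bound {h : E → ℝ} (hh : ContDiff ℝ 2 h) (hh' : HasCompactSupport (fderiv ℝ h))
      (Z : W →L[ℝ] E) : ∃ M, ∀ w, ‖(fderiv ℝ h (Z w)).comp Z‖ ≤ M := by
    obtain ⟨M, hM⟩ := hh'.exists_bound_of_continuous (hh.continuous_fderiv two_ne_zero)
    exact ⟨M * ‖Z‖, fun w ↦ (ContinuousLinearMap.opNorm_comp_le _ _).trans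
      (mul_le_mul_of_nonneg_right (hM _) (norm_nonneg Z))⟩
  obtain ⟨N, hN⟩ := lipschitz hf hf' X
  obtain ⟨N', hN'⟩ := lipschitz hg hg' Y
  obtain ⟨M, hM⟩ := bound hf hf' X
  obtain ⟨M', hM'⟩ := bound hg hg' Y
  refine exists_isSmoothWith_of_lipschitzWith (M := max M M') (N := max N N')
    (fun w ↦ (hderiv w).differentiableAt) (fun w ↦ ⟨hA _, hA' _⟩) (fun w ↦ ?_) (fun w ↦ ?_) ?_
  · exact hfderiv ▸ ⟨_, _, rfl⟩
  · rw [hfderiv, ContinuousLinearMap.opNorm_prod]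
    exact max_le_max (hM w) (hM' w)
  · rw [hfderiv]
    simpa only [one_mul] using! (ContinuousLinearMap.prodₗᵢ ℝ).lipschitz.comp (hN.prodMk hN')

/-- The first coordinate `cos θ • x + sin θ • y` of the rotation by `-θ`; under `γ.prod γ` it has
law `γ` and correlation `cos θ` with `x`. -/
noncomputable def rotatedFst (E : Type*) [NormedAddCommGroup E] [NormedSpace ℝ E] (θ : ℝ) :
    E × E →L[ℝ] E :=
  cos θ • ContinuousLinearMap.fst ℝ E E + sin θ • ContinuousLinearMap.snd ℝ E E

@[simp]
lemma rotatedFst_apply (θ : ℝ) (z : E × E) : rotatedFst E θ z = cos θ • z.1 + sin θ • z.2 := rfl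

/-- Nonnegativity of the quadratic form obtained from that of `D` by multiplying the mixed term by
`ρ`; for the Hessian of `B` at `v` this is the infinitesimal form of the Jensen inequality at `v`
for pairs of functions of `ρ`-correlated Gaussians. -/
def IsCorrNonneg (ρ : ℝ) (D : ℝ × ℝ →L[ℝ] ℝ × ℝ →L[ℝ] ℝ) : Prop :=
  ∀ x y : ℝ, 0 ≤ D (1, 0) (1, 0) * x ^ 2 +
    ρ * (D (1, 0) (0, 1) + D (0, 1) (1, 0)) * (x * y) + D (0, 1) (0, 1) * y ^ 2

variable [MeasurableSpace E] [BorelSpace E] [CompleteSpace E] [SecondCountableTopology E]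
  {γ : Measure E} [ProbabilityTheory.IsGaussian γ]

lemma integrable_clm_mul_clm {F : Type*} [NormedAddCommGroup F] [NormedSpace ℝ F]
    [MeasurableSpace F] [BorelSpace F] {m : Measure F} [ProbabilityTheory.IsGaussian m]
    (p q : StrongDual ℝ F) : Integrable (fun w ↦ p w * q w) m :=
  (ProbabilityTheory.IsGaussian.memLp_dual m p 2 (by simp)).integrable_mul
    (ProbabilityTheory.IsGaussian.memLp_dual m q 2 (by simp))

lemma integral_quadratic_clm {F : Type*} [NormedAddCommGroup F] [NormedSpace ℝ F]
    [MeasurableSpace F] [BorelSpace F] {m : Measure F} [ProbabilityTheory.IsGaussian m]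
    (p q : StrongDual ℝ F) (a b c : ℝ) :
    ∫ w, (a * p w ^ 2 + b * (p w * q w) + c * q w ^ 2) ∂m =
      a * ∫ w, p w ^ 2 ∂m + b * ∫ w, p w * q w ∂m + c * ∫ w, q w ^ 2 ∂m := by
  have hp : Integrable (fun w ↦ a * p w ^ 2) m := by
    simpa only [sq] using (integrable_clm_mul_clm p p).const_mul a
  have hq : Integrable (fun w ↦ c * q w ^ 2) m := by
    simpa only [sq] using (integrable_clm_mul_clm q q).const_mul c
  have hpq : Integrable (fun w ↦ b * (p w * q w)) m := (integrable_clm_mul_clm p q).const_mul b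
  rw [integral_add (f := fun w ↦ a * p w ^ 2 + b * (p w * q w)) (hp.add hpq) hq,
    integral_add hp hpq, integral_const_mul, integral_const_mul, integral_const_mul]

lemma integral_clm_rotatedFst_sq (hγ : ∫ x, x ∂γ = 0) (θ : ℝ) (p : StrongDual ℝ E) :
    ∫ z, p (rotatedFst E θ z) ^ 2 ∂(γ.prod γ) = ∫ x, p x ^ 2 ∂γ :=
  (measurePreserving_cos_smul_add_sin_smul hγ θ).hasLaw.integral_comp
    (f := fun x ↦ p x ^ 2) (by fun_prop)

lemma integral_clm_rotatedFst_mul_clm_fst (hγ : ∫ x, x ∂γ = 0) (θ : ℝ) (p q : StrongDual ℝ E) :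
    ∫ z, p (rotatedFst E θ z) * q z.1 ∂(γ.prod γ) = cos θ * ∫ x, p x * q x ∂γ := by
  have hq : ∫ x, q x ∂γ = 0 := by
    rw [q.integral_comp_comm (φ := fun x ↦ x) ProbabilityTheory.IsGaussian.integrable_id, hγ,
      map_zero]
  have hfst : Integrable (fun z : E × E ↦ p z.1 * q z.1) (γ.prod γ) :=
    integrable_clm_mul_clm (p.comp (.fst ℝ E E)) (q.comp (.fst ℝ E E))
  have hsnd : Integrable (fun z : E × E ↦ q z.1 * p z.2) (γ.prod γ) :=
    integrable_clm_mul_clm (q.comp (.fst ℝ E E)) (p.comp (.snd ℝ E E))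
  calc ∫ z, p (rotatedFst E θ z) * q z.1 ∂(γ.prod γ)
      = ∫ z, (cos θ * (p z.1 * q z.1) + sin θ * (q z.1 * p z.2)) ∂(γ.prod γ) := by
        congr with z
        simp only [rotatedFst_apply, map_add, map_smul, smul_eq_mul]
        ring
    _ = cos θ * ∫ x, p x * q x ∂γ := by
        rw [integral_add (hfst.const_mul _) (hsnd.const_mul _), integral_const_mul,
          integral_const_mul, integral_prod_mul (fun x ↦ q x) (fun x ↦ p x), hq,
          integral_fun_fst (μ := γ) (ν := γ) fun x ↦ p x * q x]
        simp

lemma integral_prod_self_eq_zero (hγ : ∫ x, x ∂γ = 0) : ∫ z, z ∂(γ.prod γ) = 0 := by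
  have hi : Integrable (fun z : E × E ↦ z) (γ.prod γ) :=
    ProbabilityTheory.IsGaussian.integrable_id
  refine Prod.ext ?_ ?_
  · simp [fst_integral hi, integral_fun_fst (μ := γ) (ν := γ) fun x ↦ x, hγ]
  · simp [snd_integral hi, integral_fun_snd (μ := γ) (ν := γ) fun x ↦ x, hγ]

lemma integral_bilin_rotatedFst_fst_nonneg (hγ : ∫ x, x ∂γ = 0) {θ : ℝ}
    {D : ℝ × ℝ →L[ℝ] ℝ × ℝ →L[ℝ] ℝ} (hD : IsCorrNonneg (cos θ) D)
    {L : E × E →L[ℝ] ℝ × ℝ} (hL : L ∈ splitMaps (rotatedFst E θ) (.fst ℝ E E)) :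
    0 ≤ ∫ z, D (L z) (L z) ∂(γ.prod γ) := by
  obtain ⟨p, q, rfl⟩ := hL
  set d₁₁ := D (1, 0) (1, 0) with hd₁₁
  set d₁₂ := D (1, 0) (0, 1) + D (0, 1) (1, 0) with hd₁₂
  set d₂₂ := D (0, 1) (0, 1) with hd₂₂
  set X := p.comp (rotatedFst E θ)
  set Y := q.comp (.fst ℝ E E)
  have hsplit (a b : ℝ) : D (a, b) (a, b) = d₁₁ * a ^ 2 + d₁₂ * (a * b) + d₂₂ * b ^ 2 := by
    have hab : (a, b) = a • ((1 : ℝ), (0 : ℝ)) + b • ((0 : ℝ), (1 : ℝ)) := by simp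
    simp only [hab, map_add, map_smul, add_apply, smul_apply, smul_eq_mul, hd₁₁, hd₁₂, hd₂₂]
    ring
  have hXX : ∫ z, X z ^ 2 ∂(γ.prod γ) = ∫ x, p x ^ 2 ∂γ := integral_clm_rotatedFst_sq hγ θ p
  have hXY : ∫ z, X z * Y z ∂(γ.prod γ) = cos θ * ∫ x, p x * q x ∂γ :=
    integral_clm_rotatedFst_mul_clm_fst hγ θ p q
  have hYY : ∫ z, Y z ^ 2 ∂(γ.prod γ) = ∫ x, q x ^ 2 ∂γ := by
    simpa using! integral_fun_fst (μ := γ) (ν := γ) fun x ↦ q x ^ 2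
  calc 0 ≤ ∫ x, (d₁₁ * p x ^ 2 + cos θ * d₁₂ * (p x * q x) + d₂₂ * q x ^ 2) ∂γ :=
        integral_nonneg fun x ↦ hD (p x) (q x)
    _ = ∫ z, (d₁₁ * X z ^ 2 + d₁₂ * (X z * Y z) + d₂₂ * Y z ^ 2) ∂(γ.prod γ) := by
        rw [integral_quadratic_clm, integral_quadratic_clm, hXX, hXY, hYY]
        ring
    _ = ∫ z, D (X.prod Y z) (X.prod Y z) ∂(γ.prod γ) :=
        integral_congr_ae (.of_forall fun z ↦ (hsplit _ _).symm)

end CorrelatedPair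

section Approximation

lemma add_mul_sin_arcsin_eq {a b y : ℝ} (hy : y ∈ Set.Icc a b) :
    (a + b) / 2 + (b - a) / 2 * sin (arcsin ((y - (a + b) / 2) / ((b - a) / 2))) = y := by
  obtain ⟨hay, hyb⟩ := hy
  rcases (hay.trans hyb).eq_or_lt with rfl | hab
  · simp [le_antisymm hyb hay]
  · have hr : 0 < (b - a) / 2 := by linarith
    rw [sin_arcsin, mul_div_cancel₀ _ hr.ne', add_sub_cancel]
    · rw [le_div_iff₀ hr]
      linarith
    · rw [div_le_one hr]
      linarith

lemma add_mul_sin_mem_Icc {a b : ℝ} (hab : a ≤ b) (s : ℝ) :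
    (a + b) / 2 + (b - a) / 2 * sin s ∈ Set.Icc a b := by
  constructor <;> nlinarith [neg_one_le_sin s, sin_le_one s]

variable {E : Type*} [NormedAddCommGroup E] [NormedSpace ℝ E] [FiniteDimensional ℝ E]
  [MeasurableSpace E] [BorelSpace E] {γ : Measure E} [IsFiniteMeasure γ]

lemma exists_hasCompactSupport_contDiff_tendsto_ae {H : E → ℝ} (hH : MemLp H 1 γ) :
    ∃ h : ℕ → E → ℝ, (∀ k, HasCompactSupport (h k)) ∧ (∀ k, ContDiff ℝ 2 (h k)) ∧
      ∀ᵐ x ∂γ, Filter.Tendsto (h · x) Filter.atTop (nhds (H x)) := by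
  choose h hsupp hsmooth happrox using fun k : ℕ ↦ hH.exist_eLpNorm_sub_le ENNReal.one_ne_top le_rfl
    (Nat.one_div_pos_of_nat (n := k) (α := ℝ))
  have hlim : TendstoInMeasure γ h Filter.atTop H := by
    refine tendstoInMeasure_of_tendsto_eLpNorm one_ne_zero
      (fun k ↦ (hsmooth k).continuous.aestronglyMeasurable) hH.1
      (tendsto_of_tendsto_of_tendsto_of_le_of_le tendsto_const_nhds ?_ (fun _ ↦ bot_le)
        fun k ↦ (eLpNorm_sub_comm _ _ _ _).trans_le (happrox k))
    simpa using ENNReal.tendsto_ofReal tendsto_one_div_add_atTop_nhds_zero_nat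
  obtain ⟨φ, -, hφ⟩ := hlim.exists_seq_tendsto_ae
  exact ⟨fun k ↦ h (φ k), fun k ↦ hsupp _, fun k ↦ (hsmooth _).of_le (WithTop.coe_le_coe.2 le_top),
    hφ⟩

-- Approximating `arcsin` of the rescaled `F` and composing with `sin` keeps the values in `[a, b]`.
lemma exists_contDiff_mem_Icc_tendsto_ae {a b : ℝ} {F : E → ℝ} (hF : Measurable F)
    (hFab : ∀ x, F x ∈ Set.Icc a b) :
    ∃ f : ℕ → E → ℝ, (∀ k, ContDiff ℝ 2 (f k)) ∧ (∀ k, HasCompactSupport (fderiv ℝ (f k))) ∧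
      (∀ k x, f k x ∈ Set.Icc a b) ∧ ∀ᵐ x ∂γ, Filter.Tendsto (f · x) Filter.atTop (nhds (F x)) := by
  let σ (s : ℝ) := (a + b) / 2 + (b - a) / 2 * sin s
  have hσ : ContDiff ℝ 2 σ := contDiff_const.add (contDiff_const.mul contDiff_sin)
  let H (x : E) : ℝ := arcsin ((F x - (a + b) / 2) / ((b - a) / 2))
  have hH : MemLp H 1 γ := MemLp.of_bound
    (measurable_arcsin.comp ((hF.sub_const _).div_const _)).aestronglyMeasurable (π / 2)
    (.of_forall fun x ↦ abs_le.2 (arcsin_mem_Icc _))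
  obtain ⟨h, hsupp, hsmooth, hlim⟩ := exists_hasCompactSupport_contDiff_tendsto_ae hH
  refine ⟨fun k x ↦ σ (h k x), fun k ↦ hσ.comp (hsmooth k), fun k ↦ ?_,
    fun k x ↦ add_mul_sin_mem_Icc ((hFab 0).1.trans (hFab 0).2) _, ?_⟩
  · have hc : HasCompactSupport (fun x ↦ σ (h k x) - σ 0) :=
      (hsupp k).comp_left (g := fun s ↦ σ s - σ 0) (sub_self _)
    have hfderiv : fderiv ℝ (fun x ↦ σ (h k x) - σ 0) = fderiv ℝ fun x ↦ σ (h k x) :=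
      funext fun x ↦ fderiv_sub_const _
    exact hfderiv ▸ hc.fderiv ℝ
  · filter_upwards [hlim] with x hx
    rw [← add_mul_sin_arcsin_eq (hFab x)]
    exact (hσ.continuous.tendsto _).comp hx

end Approximation

lemma le_integral_comp_of_tendsto_ae {Ω V : Type*} [TopologicalSpace Ω]
    [SecondCountableTopology Ω] [MeasurableSpace Ω] [OpensMeasurableSpace Ω] {m : Measure Ω}
    [IsProbabilityMeasure m] [NormedAddCommGroup V] [NormedSpace ℝ V] [CompleteSpace V]
    {B : V → ℝ} {K : Set V} (hB : ContinuousOn B K) (hK : IsCompact K) (hKc : Convex ℝ K)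
    {Φ : ℕ → Ω → V} {Ψ : Ω → V} (hΦ : ∀ k, Continuous (Φ k)) (hΦK : ∀ k x, Φ k x ∈ K)
    (hlim : ∀ᵐ x ∂m, Filter.Tendsto (Φ · x) Filter.atTop (nhds (Ψ x)))
    (h : ∀ k, B (∫ x, Φ k x ∂m) ≤ ∫ x, B (Φ k x) ∂m) :
    B (∫ x, Ψ x ∂m) ≤ ∫ x, B (Ψ x) ∂m := by
  obtain ⟨C, hC⟩ := hK.exists_bound_of_continuousOn hB
  obtain ⟨R, hR⟩ := hK.exists_bound_of_continuousOn continuousOn_id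
  have hBlim {u : ℕ → V} {v : V} (huK : ∀ k, u k ∈ K)
      (hu : Filter.Tendsto u Filter.atTop (nhds v)) :
      Filter.Tendsto (fun k ↦ B (u k)) Filter.atTop (nhds (B v)) :=
    (hB v (hK.isClosed.mem_of_tendsto hu (.of_forall huK))).tendsto.comp
      (tendsto_nhdsWithin_iff.2 ⟨hu, .of_forall huK⟩)
  have hmean : Filter.Tendsto (fun k ↦ ∫ x, Φ k x ∂m) Filter.atTop (nhds (∫ x, Ψ x ∂m)) :=
    tendsto_integral_of_dominated_convergence (fun _ ↦ R) (fun k ↦ (hΦ k).aestronglyMeasurable)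
      (integrable_const R) (fun k ↦ .of_forall fun x ↦ hR _ (hΦK k x)) hlim
  have hmean_mem (k : ℕ) : ∫ x, Φ k x ∂m ∈ K := hKc.integral_mem hK.isClosed
    (.of_forall (hΦK k))
    (integrable_comp_of_continuousOn_of_isCompact (g := id) continuousOn_id hK (hΦ k) (hΦK k))
  refine le_of_tendsto_of_tendsto' (hBlim hmean_mem hmean)
    (tendsto_integral_of_dominated_convergence (fun _ ↦ C)
      (fun k ↦ (hB.comp_continuous (hΦ k) (hΦK k)).aestronglyMeasurable) (integrable_const C)
      (fun k ↦ .of_forall fun x ↦ hC _ (hΦK k x)) ?_) h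
  filter_upwards [hlim] with x hx using hBlim (hΦK · x) hx

section TwoFunction

variable {E : Type*} [NormedAddCommGroup E] [NormedSpace ℝ E] [FiniteDimensional ℝ E]
  [MeasurableSpace E] [BorelSpace E] {γ : Measure E} [ProbabilityTheory.IsGaussian γ]
  {B : ℝ × ℝ → ℝ} {U : Set (ℝ × ℝ)} {a b c d θ : ℝ}

lemma le_integral_comp_rotatedFst_fst_of_contDiff (hB : ContDiffOn ℝ 3 B U) (hU : IsOpen U)
    (hKU : Set.Icc a b ×ˢ Set.Icc c d ⊆ U) (hγ : ∫ x, x ∂γ = 0)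
    (hpos : ∀ v ∈ Set.Icc a b ×ˢ Set.Icc c d, IsCorrNonneg (cos θ) (fderiv ℝ (fderiv ℝ B) v))
    {f g : E → ℝ} (hf : ContDiff ℝ 2 f) (hf' : HasCompactSupport (fderiv ℝ f))
    (hg : ContDiff ℝ 2 g) (hg' : HasCompactSupport (fderiv ℝ g))
    (hfab : ∀ x, f x ∈ Set.Icc a b) (hgcd : ∀ x, g x ∈ Set.Icc c d) :
    B (∫ z, (f (rotatedFst E θ z), g z.1) ∂(γ.prod γ)) ≤
      ∫ z, B (f (rotatedFst E θ z), g z.1) ∂(γ.prod γ) := by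
  obtain ⟨δ, hδ⟩ := exists_isSmoothWith_prodMk_comp hf hf' hg hg' hfab hgcd (rotatedFst E θ)
    (.fst ℝ E E)
  exact le_integral_comp_of_isSmoothWith hB hU (isCompact_Icc.prod isCompact_Icc)
    ((convex_Icc a b).prod (convex_Icc c d)) hKU (isClosed_splitMaps _ _)
    (integral_prod_self_eq_zero hγ)
    (fun v hv L hL ↦ integral_bilin_rotatedFst_fst_nonneg hγ (hpos v hv) hL) hδ

theorem le_integral_comp_rotatedFst_fst (hB : ContDiffOn ℝ 3 B U) (hU : IsOpen U)
    (hKU : Set.Icc a b ×ˢ Set.Icc c d ⊆ U) (hγ : ∫ x, x ∂γ = 0)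
    (hpos : ∀ v ∈ Set.Icc a b ×ˢ Set.Icc c d, IsCorrNonneg (cos θ) (fderiv ℝ (fderiv ℝ B) v))
    {F G : E → ℝ} (hF : Measurable F) (hG : Measurable G)
    (hFab : ∀ x, F x ∈ Set.Icc a b) (hGcd : ∀ x, G x ∈ Set.Icc c d) :
    B (∫ x, F x ∂γ, ∫ x, G x ∂γ) ≤ ∫ z, B (F (rotatedFst E θ z), G z.1) ∂(γ.prod γ) := by
  have hX : MeasurePreserving (rotatedFst E θ) (γ.prod γ) γ :=
    measurePreserving_cos_smul_add_sin_smul hγ θ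
  have hY : MeasurePreserving Prod.fst (γ.prod γ) γ := measurePreserving_fst
  obtain ⟨f, hf, hf', hfab, hfF⟩ := exists_contDiff_mem_Icc_tendsto_ae (γ := γ) hF hFab
  obtain ⟨g, hg, hg', hgcd, hgG⟩ := exists_contDiff_mem_Icc_tendsto_ae (γ := γ) hG hGcd
  have hlim : ∀ᵐ z ∂(γ.prod γ), Filter.Tendsto (fun k ↦ (f k (rotatedFst E θ z), g k z.1))
      Filter.atTop (nhds (F (rotatedFst E θ z), G z.1)) := by
    filter_upwards [hX.quasiMeasurePreserving.ae hfF, hY.quasiMeasurePreserving.ae hgG]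
      with z hz hz'
    exact hz.prodMk_nhds hz'
  have hmean : ∫ z, (F (rotatedFst E θ z), G z.1) ∂(γ.prod γ) = (∫ x, F x ∂γ, ∫ x, G x ∂γ) := by
    have hFi : Integrable F γ := .of_mem_Icc a b hF.aemeasurable (.of_forall hFab)
    have hGi : Integrable G γ := .of_mem_Icc c d hG.aemeasurable (.of_forall hGcd)
    exact (integral_pair (hX.integrable_comp_of_integrable hFi)
      (hY.integrable_comp_of_integrable hGi)).trans <|
      Prod.ext (hX.hasLaw.integral_comp hF.aestronglyMeasurable)
      (hY.hasLaw.integral_comp hG.aestronglyMeasurable)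
  rw [← hmean]
  exact le_integral_comp_of_tendsto_ae (hB.continuousOn.mono hKU)
    (isCompact_Icc.prod isCompact_Icc) ((convex_Icc a b).prod (convex_Icc c d))
    (fun k ↦ ((hf k).continuous.comp (rotatedFst E θ).continuous).prodMk
      ((hg k).continuous.comp continuous_fst)) (fun k z ↦ ⟨hfab k _, hgcd k _⟩) hlim
    fun k ↦ le_integral_comp_rotatedFst_fst_of_contDiff hB hU hKU hγ hpos (hf k) (hf' k) (hg k)
      (hg' k) (hfab k) (hgcd k)

end TwoFunction

section Monomial

variable {r s : ℝ}

lemma hasFDerivAt_rpow_mul_rpow {v : ℝ × ℝ} (hv : v ∈ Set.Ioi (0 : ℝ) ×ˢ Set.Ioi (0 : ℝ)) :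
    HasFDerivAt (fun v : ℝ × ℝ ↦ v.1 ^ r * v.2 ^ s)
      ((r * (v.1 ^ (r - 1) * v.2 ^ s)) • ContinuousLinearMap.fst ℝ ℝ ℝ +
        (s * (v.1 ^ r * v.2 ^ (s - 1))) • ContinuousLinearMap.snd ℝ ℝ ℝ) v := by
  refine ((hasFDerivAt_fst.rpow_const (.inl hv.1.ne')).mul
    (hasFDerivAt_snd.rpow_const (.inl hv.2.ne'))).congr_fderiv ?_
  ext <;> simp only [ContinuousLinearMap.add_comp, ContinuousLinearMap.smul_comp,
    ContinuousLinearMap.fst_comp_inl, ContinuousLinearMap.snd_comp_inl,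
    ContinuousLinearMap.fst_comp_inr, ContinuousLinearMap.snd_comp_inr, smul_zero, add_zero,
    zero_add, smul_apply, ContinuousLinearMap.id_apply, smul_eq_mul, mul_one] <;> ring

lemma fderiv_fderiv_rpow_mul_rpow {v : ℝ × ℝ}
    (hv : v ∈ Set.Ioi (0 : ℝ) ×ˢ Set.Ioi (0 : ℝ)) (x y : ℝ × ℝ) :
    fderiv ℝ (fderiv ℝ fun v : ℝ × ℝ ↦ v.1 ^ r * v.2 ^ s) v x y = v.1 ^ r * v.2 ^ s *
      (r * (r - 1) * (x.1 / v.1 * (y.1 / v.1)) +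
        r * s * (x.1 / v.1 * (y.2 / v.2) + x.2 / v.2 * (y.1 / v.1)) +
        s * (s - 1) * (x.2 / v.2 * (y.2 / v.2))) := by
  have hfderiv : (fderiv ℝ fun v : ℝ × ℝ ↦ v.1 ^ r * v.2 ^ s) =ᶠ[nhds v] fun v ↦
      (r * (v.1 ^ (r - 1) * v.2 ^ s)) • ContinuousLinearMap.fst ℝ ℝ ℝ +
        (s * (v.1 ^ r * v.2 ^ (s - 1))) • ContinuousLinearMap.snd ℝ ℝ ℝ := by
    filter_upwards [(isOpen_Ioi.prod isOpen_Ioi).mem_nhds hv] with w hw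
    exact (hasFDerivAt_rpow_mul_rpow hw).fderiv
  have hfst := ((hasFDerivAt_rpow_mul_rpow (r := r - 1) (s := s) hv).const_mul r).smul_const
    (ContinuousLinearMap.fst ℝ ℝ ℝ)
  have hsnd := ((hasFDerivAt_rpow_mul_rpow (r := r) (s := s - 1) hv).const_mul s).smul_const
    (ContinuousLinearMap.snd ℝ ℝ ℝ)
  rw [hfderiv.fderiv_eq, (hfst.fun_add hsnd).fderiv]
  have hv₁ : v.1 ≠ 0 := hv.1.ne'
  have hv₂ : v.2 ≠ 0 := hv.2.ne'
  simp only [rpow_sub_one hv₁, rpow_sub_one hv₂, smul_add, add_apply, smul_apply, smul_eq_mul,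
    ContinuousLinearMap.smulRight_apply, ContinuousLinearMap.coe_fst',
    ContinuousLinearMap.coe_snd']
  ring

lemma contDiffOn_rpow_mul_rpow {n : WithTop ℕ∞} :
    ContDiffOn ℝ n (fun v : ℝ × ℝ ↦ v.1 ^ r * v.2 ^ s) (Set.Ioi 0 ×ˢ Set.Ioi 0) :=
  (contDiffOn_fst.rpow_const_of_ne fun _ hv ↦ hv.1.ne').mul
    (contDiffOn_snd.rpow_const_of_ne fun _ hv ↦ hv.2.ne')

lemma quadratic_form_nonneg_of_sq_le_mul {a b c : ℝ} (ha : 0 ≤ a) (hc : 0 ≤ c)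
    (hb : b ^ 2 ≤ a * c) (x y : ℝ) : 0 ≤ a * x ^ 2 + 2 * b * (x * y) + c * y ^ 2 := by
  rcases ha.eq_or_lt with rfl | ha
  · obtain rfl : b = 0 := by nlinarith
    nlinarith [mul_nonneg hc (sq_nonneg y)]
  · refine nonneg_of_mul_nonneg_right ?_ ha
    calc 0 ≤ (a * x + b * y) ^ 2 + (a * c - b ^ 2) * y ^ 2 :=
          add_nonneg (sq_nonneg _) (mul_nonneg (sub_nonneg.2 hb) (sq_nonneg y))
      _ = a * (a * x ^ 2 + 2 * b * (x * y) + c * y ^ 2) := by ring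

lemma isCorrNonneg_fderiv_fderiv_rpow_mul_rpow {ρ : ℝ} (hr : 0 ≤ r * (r - 1))
    (hs : 0 ≤ s * (s - 1)) (hρ : (ρ * (r * s)) ^ 2 ≤ r * (r - 1) * (s * (s - 1))) {v : ℝ × ℝ}
    (hv : v ∈ Set.Ioi (0 : ℝ) ×ˢ Set.Ioi (0 : ℝ)) :
    IsCorrNonneg ρ (fderiv ℝ (fderiv ℝ fun v : ℝ × ℝ ↦ v.1 ^ r * v.2 ^ s) v) := by
  intro x y
  calc 0 ≤ v.1 ^ r * v.2 ^ s * (r * (r - 1) * (x / v.1) ^ 2 +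
        2 * (ρ * (r * s)) * (x / v.1 * (y / v.2)) + s * (s - 1) * (y / v.2) ^ 2) :=
        mul_nonneg (mul_nonneg (rpow_nonneg hv.1.le r) (rpow_nonneg hv.2.le s))
          (quadratic_form_nonneg_of_sq_le_mul hr hs hρ _ _)
    _ = _ := by
        simp only [fderiv_fderiv_rpow_mul_rpow hv]
        ring

end Monomial

section ReverseHolder

variable {E : Type*} [NormedAddCommGroup E] [NormedSpace ℝ E] [FiniteDimensional ℝ E]
  [MeasurableSpace E] [BorelSpace E] {γ : Measure E} [ProbabilityTheory.IsGaussian γ]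
  {a b c d p q θ : ℝ} {f g : E → ℝ}

lemma rpow_integral_mul_rpow_integral_le {r s : ℝ} (hγ : ∫ x, x ∂γ = 0) (hr : 0 ≤ r * (r - 1))
    (hs : 0 ≤ s * (s - 1)) (hθ : (cos θ * (r * s)) ^ 2 ≤ r * (r - 1) * (s * (s - 1)))
    (hf : Measurable f) (hg : Measurable g) (ha : 0 < a) (hc : 0 < c)
    (hfab : ∀ x, f x ∈ Set.Icc a b) (hgcd : ∀ x, g x ∈ Set.Icc c d) :
    (∫ x, f x ∂γ) ^ r * (∫ x, g x ∂γ) ^ s ≤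
      ∫ z, f (rotatedFst E θ z) ^ r * g z.1 ^ s ∂(γ.prod γ) := by
  have hsub : Set.Icc a b ×ˢ Set.Icc c d ⊆ Set.Ioi 0 ×ˢ Set.Ioi 0 :=
    Set.prod_mono (fun _ hx ↦ ha.trans_le hx.1) fun _ hx ↦ hc.trans_le hx.1
  exact le_integral_comp_rotatedFst_fst contDiffOn_rpow_mul_rpow (isOpen_Ioi.prod isOpen_Ioi) hsub
    hγ (fun v hv ↦ isCorrNonneg_fderiv_fderiv_rpow_mul_rpow hr hs hθ (hsub hv)) hf hg hfab hgcd

lemma rpow_mem_Icc_min_max {x : ℝ} (ha : 0 < a) (hx : x ∈ Set.Icc a b) (p : ℝ) :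
    x ^ p ∈ Set.Icc (min (a ^ p) (b ^ p)) (max (a ^ p) (b ^ p)) := by
  have hx₀ : 0 < x := ha.trans_le hx.1
  rcases le_total 0 p with hp | hp
  · exact ⟨min_le_of_left_le (rpow_le_rpow ha.le hx.1 hp),
      le_max_of_le_right (rpow_le_rpow hx₀.le hx.2 hp)⟩
  · exact ⟨min_le_of_right_le (rpow_le_rpow_of_nonpos hx₀ hx.2 hp),
      le_max_of_le_left (rpow_le_rpow_of_nonpos ha hx.1 hp)⟩

theorem reverse_holder_rotatedFst_fst (hγ : ∫ x, x ∂γ = 0) (hp : p ≠ 0) (hq : q ≠ 0) (hp₁ : p ≤ 1)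
    (hq₁ : q ≤ 1) (hθ : cos θ ^ 2 ≤ (1 - p) * (1 - q)) (hf : Measurable f) (hg : Measurable g)
    (ha : 0 < a) (hc : 0 < c) (hfab : ∀ x, f x ∈ Set.Icc a b) (hgcd : ∀ x, g x ∈ Set.Icc c d) :
    (∫ x, f x ^ p ∂γ) ^ (1 / p) * (∫ x, g x ^ q ∂γ) ^ (1 / q) ≤
      ∫ z, f (rotatedFst E θ z) * g z.1 ∂(γ.prod γ) := by
  have hb : 0 < b := ha.trans_le ((hfab 0).1.trans (hfab 0).2)
  have hd : 0 < d := hc.trans_le ((hgcd 0).1.trans (hgcd 0).2)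
  have hess {p : ℝ} (hp : p ≠ 0) : 1 / p * (1 / p - 1) = (1 - p) / p ^ 2 := by
    field_simp
  have hcorr : (cos θ * (1 / p * (1 / q))) ^ 2 ≤
      1 / p * (1 / p - 1) * (1 / q * (1 / q - 1)) := by
    rw [hess hp, hess hq]
    calc (cos θ * (1 / p * (1 / q))) ^ 2 = cos θ ^ 2 / (p ^ 2 * q ^ 2) := by
          field_simp
      _ ≤ (1 - p) * (1 - q) / (p ^ 2 * q ^ 2) := by gcongr
      _ = (1 - p) / p ^ 2 * ((1 - q) / q ^ 2) := (div_mul_div_comm ..).symm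
  have hcancel {f : E → ℝ} {a b p : ℝ} (ha : 0 < a) (hfab : ∀ x, f x ∈ Set.Icc a b) (hp : p ≠ 0)
      (x : E) : (f x ^ p) ^ (1 / p) = f x := by
    rw [one_div, rpow_rpow_inv (ha.le.trans (hfab x).1) hp]
  simpa only [hcancel ha hfab hp, hcancel hc hgcd hq] using rpow_integral_mul_rpow_integral_le hγ
    (hess hp ▸ div_nonneg (sub_nonneg.2 hp₁) (sq_nonneg p))
    (hess hq ▸ div_nonneg (sub_nonneg.2 hq₁) (sq_nonneg q)) hcorr
    (hf.pow_const p) (hg.pow_const q) (lt_min (rpow_pos_of_pos ha p) (rpow_pos_of_pos hb p))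
    (lt_min (rpow_pos_of_pos hc q) (rpow_pos_of_pos hd q))
    (fun x ↦ rpow_mem_Icc_min_max ha (hfab x) p) fun x ↦ rpow_mem_Icc_min_max hc (hgcd x) q

end ReverseHolder

lemma integral_mem_Icc {Ω : Type*} [MeasurableSpace Ω] {μ : Measure Ω} [IsProbabilityMeasure μ]
    {f : Ω → ℝ} {a b : ℝ} (hf : Measurable f) (hfab : ∀ x, f x ∈ Set.Icc a b) :
    ∫ x, f x ∂μ ∈ Set.Icc a b :=
  (convex_Icc a b).integral_mem isClosed_Icc (.of_forall hfab)
    (.of_mem_Icc a b hf.aemeasurable (.of_forall hfab))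

section OrnsteinUhlenbeck

variable {E : Type*} [NormedAddCommGroup E] [NormedSpace ℝ E] [MeasurableSpace E]

/-- The Ornstein–Uhlenbeck semigroup with stationary measure `γ`, given by the Mehler formula;
`γ` is meant to be a centered Gaussian measure. -/
noncomputable def ornsteinUhlenbeck (γ : Measure E) (t : ℝ) (f : E → ℝ) (x : E) : ℝ :=
  ∫ y, f (exp (-t) • x + √(1 - exp (-2 * t)) • y) ∂γ

lemma exists_cos_eq_exp_neg {t : ℝ} (ht : 0 ≤ t) :
    ∃ θ, cos θ = exp (-t) ∧ sin θ = √(1 - exp (-2 * t)) := by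
  refine ⟨arccos (exp (-t)), cos_arccos (by linarith [exp_pos (-t)])
    (exp_le_one_iff.2 (by linarith)), ?_⟩
  rw [sin_arccos, ← exp_nat_mul]
  ring_nf

variable {γ : Measure E} [IsProbabilityMeasure γ] {a b t : ℝ} {f : E → ℝ}

variable [BorelSpace E]

lemma ornsteinUhlenbeck_mem_Icc (hf : Measurable f) (hfab : ∀ x, f x ∈ Set.Icc a b) (x : E) :
    ornsteinUhlenbeck γ t f x ∈ Set.Icc a b :=
  integral_mem_Icc (hf.comp (by fun_prop)) fun _ ↦ hfab _

variable [SecondCountableTopology E]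

lemma measurable_ornsteinUhlenbeck (hf : Measurable f) : Measurable (ornsteinUhlenbeck γ t f) :=
  (hf.comp (by fun_prop : Measurable fun z : E × E ↦
    exp (-t) • z.1 + √(1 - exp (-2 * t)) • z.2)).stronglyMeasurable.integral_prod_right'.measurable

lemma integral_mul_rotatedFst_fst_eq {c d θ : ℝ} {g : E → ℝ} (hcos : cos θ = exp (-t))
    (hsin : sin θ = √(1 - exp (-2 * t))) (hf : Measurable f) (hg : Measurable g)
    (hfab : ∀ x, f x ∈ Set.Icc a b) (hgcd : ∀ x, g x ∈ Set.Icc c d) :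
    ∫ z, f (rotatedFst E θ z) * g z.1 ∂(γ.prod γ) = ∫ x, ornsteinUhlenbeck γ t f x * g x ∂γ := by
  have hfi : Integrable (fun z ↦ f (rotatedFst E θ z)) (γ.prod γ) :=
    .of_mem_Icc a b (hf.comp (rotatedFst E θ).measurable).aemeasurable (.of_forall fun z ↦ hfab _)
  have hint : Integrable (fun z ↦ f (rotatedFst E θ z) * g z.1) (γ.prod γ) :=
    hfi.mul_bdd (c := max |c| |d|) (hg.comp measurable_fst).aestronglyMeasurable
      (.of_forall fun z ↦ abs_le_max_abs_abs (hgcd _).1 (hgcd _).2)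
  rw [integral_prod _ hint]
  simp only [rotatedFst_apply, hcos, hsin, integral_mul_const, ornsteinUhlenbeck]

end OrnsteinUhlenbeck

section ReverseHypercontractivity

variable {E : Type*} [NormedAddCommGroup E] [NormedSpace ℝ E] [FiniteDimensional ℝ E]
  [MeasurableSpace E] [BorelSpace E] {γ : Measure E} [ProbabilityTheory.IsGaussian γ]
  {a b t : ℝ} {f : E → ℝ}

theorem reverse_holder_ornsteinUhlenbeck {c d p q : ℝ} {g : E → ℝ} (hγ : ∫ x, x ∂γ = 0)
    (ht : 0 ≤ t) (hp : p ≠ 0) (hq : q ≠ 0) (hp₁ : p ≤ 1) (hq₁ : q ≤ 1)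
    (hpq : exp (-2 * t) ≤ (1 - p) * (1 - q)) (hf : Measurable f) (hg : Measurable g) (ha : 0 < a)
    (hc : 0 < c) (hfab : ∀ x, f x ∈ Set.Icc a b) (hgcd : ∀ x, g x ∈ Set.Icc c d) :
    (∫ x, f x ^ p ∂γ) ^ (1 / p) * (∫ x, g x ^ q ∂γ) ^ (1 / q) ≤
      ∫ x, ornsteinUhlenbeck γ t f x * g x ∂γ := by
  obtain ⟨θ, hcos, hsin⟩ := exists_cos_eq_exp_neg ht
  have hθ : cos θ ^ 2 ≤ (1 - p) * (1 - q) := by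
    rw [hcos, ← exp_nat_mul]
    simpa using hpq
  rw [← integral_mul_rotatedFst_fst_eq hcos hsin hf hg hfab hgcd]
  exact reverse_holder_rotatedFst_fst hγ hp hq hp₁ hq₁ hθ hf hg ha hc hfab hgcd

lemma le_rpow_one_div_of_mul_rpow_le {A M q : ℝ} (hM : 0 < M) (hq : q ≠ 0)
    (hA : A * M ^ (1 / (q / (q - 1))) ≤ M) : A ≤ M ^ (1 / q) := by
  refine le_of_mul_le_mul_right (hA.trans_eq ?_) (rpow_pos_of_pos hM _)
  rw [← rpow_add hM, one_div_div, ← add_div, add_sub_cancel, div_self hq, rpow_one]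

theorem reverse_hypercontractivity_OU_general {q₁ q₂ : ℝ} (hγ : ∫ x, x ∂γ = 0) (ht : 0 ≤ t)
    (hq₁ : q₁ ≠ 0) (hq₂ : q₂ ≠ 0) (hq₂' : q₂ < 1) (hq : exp (-2 * t) * (1 - q₂) ≤ 1 - q₁)
    (hf : Measurable f) (ha : 0 < a) (hfab : ∀ x, f x ∈ Set.Icc a b) :
    (∫ x, f x ^ q₁ ∂γ) ^ (1 / q₁) ≤ (∫ x, ornsteinUhlenbeck γ t f x ^ q₂ ∂γ) ^ (1 / q₂) := by
  set N := ornsteinUhlenbeck γ t f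
  have hN : Measurable N := measurable_ornsteinUhlenbeck hf
  have hNab (x : E) : N x ∈ Set.Icc a b := ornsteinUhlenbeck_mem_Icc hf hfab x
  have hN₀ (x : E) : 0 < N x := ha.trans_le (hNab x).1
  have hNpow (p : ℝ) (x : E) := rpow_mem_Icc_min_max ha (hNab x) p
  have hmin (p : ℝ) : 0 < min (a ^ p) (b ^ p) :=
    lt_min (rpow_pos_of_pos ha p) (rpow_pos_of_pos ((hN₀ 0).trans_le (hNab 0).2) p)
  have hM : 0 < ∫ x, N x ^ q₂ ∂γ :=
    (hmin q₂).trans_le (integral_mem_Icc (hN.pow_const q₂) (hNpow q₂)).1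
  have hq₂₁ : q₂ - 1 ≠ 0 := (sub_neg.2 hq₂').ne
  have hconj : 1 - q₂ / (q₂ - 1) = (1 - q₂)⁻¹ := by grind
  have hq₁₁ : q₁ ≤ 1 := sub_nonneg.1 <|
    (mul_nonneg (exp_pos _).le (sub_nonneg.2 hq₂'.le)).trans hq
  have hconj₁ : q₂ / (q₂ - 1) ≤ 1 :=
    sub_nonneg.1 (hconj ▸ inv_nonneg.2 (sub_nonneg.2 hq₂'.le))
  have hexp : exp (-2 * t) ≤ (1 - q₁) * (1 - q₂ / (q₂ - 1)) := by
    rwa [hconj, ← div_eq_mul_inv, le_div_iff₀ (sub_pos.2 hq₂')]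
  have hmul (x : E) : N x * N x ^ (q₂ - 1) = N x ^ q₂ := by
    rw [← rpow_one_add' (hN₀ x).le (by simpa using hq₂), add_sub_cancel]
  have hrpow (x : E) : (N x ^ (q₂ - 1)) ^ (q₂ / (q₂ - 1)) = N x ^ q₂ := by
    rw [← rpow_mul (hN₀ x).le, mul_div_cancel₀ _ hq₂₁]
  refine le_rpow_one_div_of_mul_rpow_le hM hq₂ ?_
  simpa only [hmul, hrpow, N] using reverse_holder_ornsteinUhlenbeck hγ ht hq₁
    (div_ne_zero hq₂ hq₂₁) hq₁₁ hconj₁ hexp hf (hN.pow_const (q₂ - 1)) ha (hmin (q₂ - 1)) hfab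
    (hNpow (q₂ - 1))

end ReverseHypercontractivity

section StandardGaussian

lemma integrable_rexp_neg_norm_sq_div_two {V : Type*} [NormedAddCommGroup V]
    [InnerProductSpace ℝ V] [FiniteDimensional ℝ V] [MeasurableSpace V] [BorelSpace V] :
    Integrable fun v : V ↦ exp (-‖v‖ ^ 2 / 2) := by
  refine .of_integral_ne_zero ?_
  have hint := GaussianFourier.integral_rexp_neg_mul_sq_norm (V := V) (b := 1 / 2) (by norm_num)
  simp only [← neg_div, div_mul_eq_mul_div, neg_mul, one_mul] at hint
  rw [hint]
  positivity

lemma gaussianMeasure_eq_stdGaussian (n : ℕ) :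
    gaussianMeasure n = ProbabilityTheory.stdGaussian (EuclideanSpace ℝ (Fin n)) := by
  have hfin : IsFiniteMeasure (gaussianMeasure n) :=
    isFiniteMeasure_withDensity_ofReal (integrable_rexp_neg_norm_sq_div_two.const_mul _).2
  have hpi : ((2 * π : ℝ) : ℂ) ≠ 0 := by exact_mod_cast two_pi_pos.ne'
  have htwo_pi : (π : ℂ) / (1 / 2) = ((2 * π : ℝ) : ℂ) := by
    push_cast
    ring
  refine Measure.ext_of_charFun (funext fun w ↦ ?_)
  rw [ProbabilityTheory.charFun_stdGaussian, charFun_apply, gaussianMeasure,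
    integral_withDensity_eq_integral_toReal_smul (by fun_prop) (by simp)]
  calc _ = ∫ v : EuclideanSpace ℝ (Fin n), ((2 * π : ℝ) : ℂ) ^ (-(n : ℂ) / 2) *
        Complex.exp (-(1 / 2) * ‖v‖ ^ 2 + Complex.I * (inner ℝ w v : ℝ)) := by
        refine integral_congr_ae (.of_forall fun v ↦ ?_)
        simp only
        rw [ENNReal.toReal_ofReal (by positivity), Complex.real_smul, Complex.exp_add,
          real_inner_comm w v, Complex.ofReal_mul, Complex.ofReal_cpow (by positivity)]
        push_cast
        ring_nf
    _ = ((2 * π : ℝ) : ℂ) ^ (-(n : ℂ) / 2 + (n : ℂ) / 2) *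
        Complex.exp (Complex.I ^ 2 * ‖w‖ ^ 2 / (4 * (1 / 2))) := by
        rw [integral_const_mul, GaussianFourier.integral_cexp_neg_mul_sq_norm_add (by norm_num),
          htwo_pi, finrank_euclideanSpace_fin, ← mul_assoc, ← Complex.cpow_add _ _ hpi]
    _ = _ := by
        rw [neg_div, neg_add_cancel, Complex.cpow_zero, Complex.I_sq]
        ring_nf

instance isGaussian_gaussianMeasure (n : ℕ) :
    ProbabilityTheory.IsGaussian (gaussianMeasure n) :=
  gaussianMeasure_eq_stdGaussian n ▸ inferInstance

lemma integral_id_gaussianMeasure (n : ℕ) : ∫ x, x ∂(gaussianMeasure n) = 0 :=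
  gaussianMeasure_eq_stdGaussian n ▸ ProbabilityTheory.integral_id_stdGaussian

end StandardGaussian

theorem reverse_hypercontractivity_OU (n : ℕ) (hn : 1 ≤ n) (t : ℝ) (ht : 0 ≤ t)
    (q₁ q₂ : ℝ) (hq₂ : 0 < q₂) (hq : q₂ ≤ q₁) (hq₁ : q₁ < 1)
    (hqt : q₂ - 1 = Real.exp (2 * t) * (q₁ - 1))
    (f : EuclideanSpace ℝ (Fin n) → ℝ) (hf : Measurable f)
    (a b : ℝ) (ha : 0 < a) (hab : ∀ x, a ≤ f x ∧ f x ≤ b) :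
    (∫ x, f x ^ q₁ ∂(gaussianMeasure n)) ^ (1 / q₁) ≤
      (∫ x, OU n t f x ^ q₂ ∂(gaussianMeasure n)) ^ (1 / q₂) := by
  have hq₁₂ : exp (-2 * t) * (1 - q₂) = 1 - q₁ := by
    rw [← neg_sub q₂, hqt, ← neg_sub q₁, ← mul_neg, ← mul_assoc, ← exp_add]
    simp
  exact reverse_hypercontractivity_OU_general (integral_id_gaussianMeasure n) ht
    (hq₂.trans_le hq).ne' hq₂.ne' (hq.trans_lt hq₁) hq₁₂.le hf ha hab
end

section
/- Let n ≥ 1 and let f : ℝ^n → ℝ be a smooth function with 0 < a ≤ f ≤ b for some constants a, b and with bounded gradient. Then for every t > 0 and every x ∈ ℝ^n, P_t(f log f)(x) − P_t f(x) · log P_t f(x) ≤ t · P_t(|∇f|²/f)(x) (local logarithmic Sobolev inequality for the Euclidean heat semigroup). -/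
open MeasureTheory Real

/-- Euclidean heat semigroup, with `heat n 0 f = f`. -/
noncomputable def heat (n : ℕ) (t : ℝ) (f : EuclideanSpace ℝ (Fin n) → ℝ)
    (x : EuclideanSpace ℝ (Fin n)) : ℝ :=
  if t = 0 then f x
  else (4 * π * t) ^ (-(n : ℝ) / 2) * ∫ y, f y * Real.exp (-‖x - y‖ ^ 2 / (4 * t))

/-!
At time `t` the heat semigroup averages `f` against a Gaussian of covariance `2t`, so everything
reduces to the logarithmic Sobolev inequality `Ent f ≤ ½ ∫ |∇f|² / f` for the standard Gaussian
measure `γ`. Let `X`, `Y` be independent with law `γ` and let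
`f_θ (x) = E f(cos θ x + sin θ Y)`, which moves from `f` at `θ = 0` to the constant `∫ f dγ` at
`θ = π/2`. Since the law of `(X, Y)` is rotation invariant, Gaussian integration by parts gives

  `d/dθ ∫ f_θ log f_θ dγ = - sin θ cos θ ∫ |(∇f)_θ|² / f_θ dγ`.

By Cauchy–Schwarz `|(∇f)_θ|² / f_θ ≤ (|∇f|² / f)_θ`, and `∫ g_θ dγ = ∫ g dγ`, so the right-hand
side is at least `- sin θ cos θ ∫ |∇f|² / f dγ`. Integrating over `[0, π/2]` gives the factor `½`.
-/

open Module ProbabilityTheory Set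
open scoped Gradient RealInnerProductSpace

section Gradient

variable {E : Type*} [NormedAddCommGroup E] [InnerProductSpace ℝ E] [CompleteSpace E] {f : E → ℝ}

lemma norm_gradient (f : E → ℝ) (x : E) : ‖∇ f x‖ = ‖fderiv ℝ f x‖ := by
  rw [← toDual_gradient, LinearIsometryEquiv.norm_map]

lemma continuous_gradient (hf : ContDiff ℝ 1 f) : Continuous (∇ f) :=
  (InnerProductSpace.toDual ℝ E).symm.continuous.comp (hf.continuous_fderiv one_ne_zero)

lemma gradient_comp_const_add_smul (f : E → ℝ) (x : E) (c : ℝ) (z : E) :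
    ∇ (fun z ↦ f (x + c • z)) z = c • ∇ f (x + c • z) := by
  refine ext_inner_right ℝ fun v ↦ ?_
  rw [inner_gradient_left, inner_smul_left, inner_gradient_left,
    fderiv_comp_smul (f := fun z ↦ f (x + z)), fderiv_comp_add_left]
  simp

lemma gradient_comp_real {φ : ℝ → ℝ} {x : E} (hφ : DifferentiableAt ℝ φ (f x))
    (hf : DifferentiableAt ℝ f x) : ∇ (fun y ↦ φ (f y)) x = deriv φ (f x) • ∇ f x := by
  have chain : HasFDerivAt (fun y ↦ φ (f y)) (deriv φ (f x) • fderiv ℝ f x) x :=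
    hφ.hasDerivAt.comp_hasFDerivAt x hf.hasFDerivAt
  refine ext_inner_right ℝ fun v ↦ ?_
  rw [inner_gradient_left, inner_smul_left, inner_gradient_left, chain.fderiv]
  simp

end Gradient

lemma norm_integral_sq_div_integral_le {α F : Type*} [MeasurableSpace α] [NormedAddCommGroup F]
    [NormedSpace ℝ F] {μ : Measure α} {u : α → ℝ} {w : α → F} (hu : Integrable u μ)
    (hu_pos : ∀ᵐ y ∂μ, 0 < u y) (hw : Integrable w μ)
    (hwu : Integrable (fun y ↦ ‖w y‖ ^ 2 / u y) μ) :
    ‖∫ y, w y ∂μ‖ ^ 2 / ∫ y, u y ∂μ ≤ ∫ y, ‖w y‖ ^ 2 / u y ∂μ := by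
  set U := ∫ y, u y ∂μ
  set c := ‖∫ y, w y ∂μ‖ / U with hc
  have hU : 0 ≤ U := integral_nonneg_of_ae (hu_pos.mono fun _ h ↦ h.le)
  have tangent : ∀ᵐ y ∂μ, 2 * c * ‖w y‖ - c ^ 2 * u y ≤ ‖w y‖ ^ 2 / u y := by
    filter_upwards [hu_pos] with y hy
    rw [le_div_iff₀ hy]
    linarith [sq_nonneg (‖w y‖ - c * u y)]
  calc ‖∫ y, w y ∂μ‖ ^ 2 / U = 2 * c * ‖∫ y, w y ∂μ‖ - c ^ 2 * U := by
        rcases hU.eq_or_lt with hU | hU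
        · simp [hc, ← hU]
        · rw [hc]
          field_simp
          ring
    _ ≤ 2 * c * ∫ y, ‖w y‖ ∂μ - c ^ 2 * U := by
        gcongr
        exact norm_integral_le_integral_norm w
    _ = ∫ y, (2 * c * ‖w y‖ - c ^ 2 * u y) ∂μ := by
        rw [integral_sub (hw.norm.const_mul _) (hu.const_mul _), integral_const_mul,
          integral_const_mul]
    _ ≤ ∫ y, ‖w y‖ ^ 2 / u y ∂μ :=
        integral_mono_ae ((hw.norm.const_mul _).sub (hu.const_mul _)) hwu tangent

section GaussianDensity

variable {E : Type*} [NormedAddCommGroup E] [InnerProductSpace ℝ E]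

/-- Density of the standard Gaussian measure `stdGaussian E` with respect to Lebesgue measure. -/
noncomputable def stdGaussianPDFReal (z : E) : ℝ :=
  (2 * π) ^ (-(finrank ℝ E : ℝ) / 2) * exp (-‖z‖ ^ 2 / 2)

lemma continuous_stdGaussianPDFReal : Continuous (stdGaussianPDFReal (E := E)) := by
  unfold stdGaussianPDFReal
  fun_prop

lemma stdGaussianPDFReal_nonneg (z : E) : 0 ≤ stdGaussianPDFReal z := by
  unfold stdGaussianPDFReal
  positivity

lemma hasLineDerivAt_stdGaussianPDFReal (z p : E) :
    HasLineDerivAt ℝ stdGaussianPDFReal (-(⟪p, z⟫ * stdGaussianPDFReal z)) z p := by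
  have h := ((((hasStrictFDerivAt_norm_sq z).hasFDerivAt.neg.mul_const (1 / 2 : ℝ)).exp).const_mul
    ((2 * π) ^ (-(finrank ℝ E : ℝ) / 2))).hasLineDerivAt p
  convert! h using 1
  · ext; simp [stdGaussianPDFReal, div_eq_mul_inv]
  · simp [stdGaussianPDFReal, real_inner_comm p, div_eq_mul_inv]
    ring

variable [FiniteDimensional ℝ E] [MeasurableSpace E] [BorelSpace E]
  {F : Type*} [NormedAddCommGroup F] [NormedSpace ℝ F]

lemma integral_cexp_inner_mul_stdGaussianPDFReal (ξ : E) :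
    ∫ z, (stdGaussianPDFReal z : ℂ) * Complex.exp (⟪z, ξ⟫ * Complex.I) =
      Complex.exp (-‖ξ‖ ^ 2 / 2) := by
  have hpow : ((π : ℂ) / (1 / 2)) ^ ((finrank ℝ E : ℂ) / 2) =
      (((2 * π) ^ ((finrank ℝ E : ℝ) / 2) : ℝ) : ℂ) := by
    rw [Complex.ofReal_cpow (by positivity)]
    push_cast
    congr 1
    ring
  calc ∫ z, (stdGaussianPDFReal z : ℂ) * Complex.exp (⟪z, ξ⟫ * Complex.I)
      = (((2 * π) ^ (-(finrank ℝ E : ℝ) / 2) : ℝ) : ℂ) *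
          ∫ z : E, Complex.exp (-(1 / 2) * ‖z‖ ^ 2 + Complex.I * ⟪ξ, z⟫) := by
        rw [← integral_const_mul]
        congr with z
        rw [Complex.exp_add, stdGaussianPDFReal, real_inner_comm]
        push_cast
        ring_nf
    _ = Complex.exp (-‖ξ‖ ^ 2 / 2) := by
        rw [GaussianFourier.integral_cexp_neg_mul_sq_norm_add (by norm_num), hpow, ← mul_assoc,
          ← Complex.ofReal_mul, ← rpow_add (by positivity), neg_div (2 : ℝ), neg_add_cancel,
          rpow_zero, Complex.ofReal_one, one_mul, Complex.I_sq]
        ring_nf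

lemma integrable_stdGaussianPDFReal : Integrable (stdGaussianPDFReal (E := E)) := by
  have hexp (z : E) : -‖z‖ ^ 2 / 2 = -(1 / 2) * ‖z‖ ^ 2 := by ring
  refine Integrable.const_mul (.of_integral_ne_zero ?_) _
  simp only [hexp]
  rw [GaussianFourier.integral_rexp_neg_mul_sq_norm (by norm_num)]
  positivity

lemma stdGaussian_eq_withDensity :
    stdGaussian E = volume.withDensity fun z ↦ ENNReal.ofReal (stdGaussianPDFReal z) := by
  have := isFiniteMeasure_withDensity_ofReal (integrable_stdGaussianPDFReal (E := E)).2
  refine Measure.ext_of_charFun (funext fun ξ ↦ ?_)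
  rw [charFun_stdGaussian, charFun_apply, integral_withDensity_eq_integral_toReal_smul
    (by have := continuous_stdGaussianPDFReal (E := E); fun_prop) (by simp),
    ← integral_cexp_inner_mul_stdGaussianPDFReal]
  simp only [ENNReal.toReal_ofReal (stdGaussianPDFReal_nonneg _), Complex.real_smul]

lemma integral_stdGaussian (g : E → F) :
    ∫ z, g z ∂stdGaussian E = ∫ z, stdGaussianPDFReal z • g z := by
  rw [stdGaussian_eq_withDensity, integral_withDensity_eq_integral_toReal_smul
    continuous_stdGaussianPDFReal.measurable.ennreal_ofReal (by simp)]
  simp only [ENNReal.toReal_ofReal (stdGaussianPDFReal_nonneg _)]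

lemma integrable_stdGaussian_iff {g : E → F} :
    Integrable g (stdGaussian E) ↔ Integrable fun z ↦ stdGaussianPDFReal z • g z := by
  rw [stdGaussian_eq_withDensity, integrable_withDensity_iff_integrable_smul'
    continuous_stdGaussianPDFReal.measurable.ennreal_ofReal (by simp)]
  simp only [ENNReal.toReal_ofReal (stdGaussianPDFReal_nonneg _)]

lemma integral_mul_inner_stdGaussian {h h' : E → ℝ} {p : E}
    (hh : ∀ v, HasLineDerivAt ℝ h (h' v) v p) (h_int : Integrable h (stdGaussian E))
    (h_int' : Integrable h' (stdGaussian E))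
    (h_int_inner : Integrable (fun v ↦ h v * ⟪p, v⟫) (stdGaussian E)) :
    ∫ v, h v * ⟪p, v⟫ ∂stdGaussian E = ∫ v, h' v ∂stdGaussian E := by
  rw [integrable_stdGaussian_iff] at h_int h_int' h_int_inner
  have hswap (v : E) : -(⟪p, v⟫ * stdGaussianPDFReal v) * h v =
      -(stdGaussianPDFReal v • (h v * ⟪p, v⟫)) := by
    rw [smul_eq_mul]
    ring
  have by_parts := integral_bilinear_hasLineDerivAt_right_eq_neg_left_of_integrable
    (B := ContinuousLinearMap.mul ℝ ℝ) (μ := volume) (v := p) (f := stdGaussianPDFReal)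
    (by simpa only [ContinuousLinearMap.mul_apply', hswap] using h_int_inner.fun_neg) h_int' h_int
    (fun v _ ↦ hasLineDerivAt_stdGaussianPDFReal v p) (fun v _ ↦ hh v)
  simp only [ContinuousLinearMap.mul_apply', hswap, integral_neg, neg_neg] at by_parts
  rw [integral_stdGaussian, integral_stdGaussian, ← by_parts]
  rfl

lemma heat_eq_integral_stdGaussian {n : ℕ} {t : ℝ} (ht : 0 < t)
    (g : EuclideanSpace ℝ (Fin n) → ℝ) (x : EuclideanSpace ℝ (Fin n)) :
    heat n t g x = ∫ z, g (x + √(2 * t) • z) ∂stdGaussian (EuclideanSpace ℝ (Fin n)) := by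
  have hs2 : √(2 * t) ^ 2 = 2 * t := sq_sqrt (by positivity)
  have hpow : (√(2 * t) ^ n)⁻¹ = (2 * t) ^ (-(n : ℝ) / 2) := by
    rw [sqrt_eq_rpow, ← rpow_natCast, ← rpow_mul (by positivity), ← rpow_neg (by positivity)]
    ring_nf
  let K (w : EuclideanSpace ℝ (Fin n)) : ℝ := exp (-‖w‖ ^ 2 / (4 * t)) * g (x + w)
  calc heat n t g x = (4 * π * t) ^ (-(n : ℝ) / 2) * ∫ w, K w := by
        rw [heat, if_neg ht.ne', ← integral_add_left_eq_self _ x]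
        simp only [sub_add_cancel_left, norm_neg, K, mul_comm]
    _ = (2 * π) ^ (-(n : ℝ) / 2) * ((2 * t) ^ (-(n : ℝ) / 2) * ∫ w, K w) := by
        rw [← mul_assoc, ← mul_rpow (by positivity) (by positivity)]
        ring_nf
    _ = (2 * π) ^ (-(n : ℝ) / 2) * ∫ z, K (√(2 * t) • z) := by
        rw [Measure.integral_comp_smul volume K, finrank_euclideanSpace_fin, hpow,
          abs_of_nonneg (by positivity), smul_eq_mul]
    _ = ∫ z, g (x + √(2 * t) • z) ∂stdGaussian (EuclideanSpace ℝ (Fin n)) := by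
        rw [integral_stdGaussian, ← integral_const_mul]
        congr with z
        have hexp : -‖√(2 * t) • z‖ ^ 2 / (4 * t) = -‖z‖ ^ 2 / 2 := by
          rw [norm_smul, mul_pow, norm_of_nonneg (sqrt_nonneg _), hs2]
          field_simp
          ring
        rw [stdGaussianPDFReal, finrank_euclideanSpace_fin, smul_eq_mul, mul_assoc, ← hexp]

end GaussianDensity

section Rotation

variable {E F : Type*} [NormedAddCommGroup E] [NormedSpace ℝ E] [NormedAddCommGroup F]
  [NormedSpace ℝ F]

lemma cos_smul_add_neg_sin_smul_rotation (θ : ℝ) (x y : E) :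
    cos θ • (cos θ • x + sin θ • y) + -sin θ • (-sin θ • x + cos θ • y) = x :=
  (by module : _ = (cos θ ^ 2 + sin θ ^ 2) • x).trans (by rw [cos_sq_add_sin_sq, one_smul])

lemma norm_neg_sin_smul_add_cos_smul_le (θ : ℝ) (x y : E) :
    ‖-sin θ • x + cos θ • y‖ ≤ ‖x‖ + ‖y‖ := by
  refine (norm_add_le _ _).trans ?_
  rw [norm_smul, norm_smul, norm_neg]
  gcongr
  · exact mul_le_of_le_one_left (norm_nonneg _) (abs_sin_le_one θ)
  · exact mul_le_of_le_one_left (norm_nonneg _) (abs_cos_le_one θ)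

lemma integral_integral_comp_rotation [CompleteSpace E] [SecondCountableTopology E]
    [MeasurableSpace E] [BorelSpace E] {μ : Measure E} [IsGaussian μ] (hμ : μ[id] = 0) (θ : ℝ)
    {G : E → E → F} (hG : Integrable (fun z : E × E ↦ G z.1 z.2) (μ.prod μ)) :
    ∫ x, ∫ y, G (cos θ • x + sin θ • y) (-sin θ • x + cos θ • y) ∂μ ∂μ =
      ∫ x, ∫ y, G x y ∂μ ∂μ := by
  have hrot : MeasurePreserving (ContinuousLinearMap.rotation θ) (μ.prod μ) (μ.prod μ) :=
    ⟨by fun_prop, IsGaussian.map_rotation_eq_self hμ θ⟩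
  rw [← integral_prod _ hG, ← hrot.map_eq,
    integral_map hrot.aemeasurable (hrot.map_eq.symm ▸ hG.aestronglyMeasurable)]
  exact (integral_prod _ (hrot.integrable_comp_of_integrable hG)).symm

end Rotation

section Mehler

variable {E : Type*} [NormedAddCommGroup E] [InnerProductSpace ℝ E] [FiniteDimensional ℝ E]
  [MeasurableSpace E] [BorelSpace E] {F : Type*} [NormedAddCommGroup F]

lemma integrable_norm_stdGaussian : Integrable (fun x : E ↦ ‖x‖) (stdGaussian E) :=
  IsGaussian.integrable_id.norm

lemma integrable_comp_cos_smul_add_sin_smul {g : E → F} {M : ℝ} (hg : Continuous g)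
    (hM : ∀ x, ‖g x‖ ≤ M) (θ : ℝ) (x : E) :
    Integrable (fun y ↦ g (cos θ • x + sin θ • y)) (stdGaussian E) :=
  .of_bound (by fun_prop) M (.of_forall fun _ ↦ hM _)

variable [NormedSpace ℝ F]

/-- Mehler's formula for the Ornstein–Uhlenbeck semigroup, with time `s` replaced by the angle `θ`
such that `cos θ = exp (-s)`. -/
noncomputable def mehler (f : E → F) (θ : ℝ) (x : E) : F :=
  ∫ y, f (cos θ • x + sin θ • y) ∂stdGaussian E

lemma continuous_mehler {g : E → F} {M : ℝ} (hg : Continuous g) (hM : ∀ x, ‖g x‖ ≤ M) (θ : ℝ) :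
    Continuous (mehler g θ) :=
  continuous_of_dominated (bound := fun _ ↦ M) (fun _ ↦ by fun_prop)
    (fun _ ↦ .of_forall fun _ ↦ hM _) (integrable_const _) (.of_forall fun _ ↦ by fun_prop)

lemma norm_mehler_le {g : E → F} {M : ℝ} (hM : ∀ x, ‖g x‖ ≤ M) (θ : ℝ) (x : E) :
    ‖mehler g θ x‖ ≤ M := by
  simpa [mehler] using norm_integral_le_of_norm_le_const (μ := stdGaussian E)
    (.of_forall fun y ↦ hM (cos θ • x + sin θ • y))

lemma integral_mehler [CompleteSpace F] {g : E → F} {M : ℝ} (hg : Continuous g)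
    (hM : ∀ x, ‖g x‖ ≤ M) (θ : ℝ) :
    ∫ x, mehler g θ x ∂stdGaussian E = ∫ x, g x ∂stdGaussian E := by
  have h := integral_integral_comp_rotation (μ := stdGaussian E) (by simp) θ (G := fun x _ ↦ g x)
    (.of_bound (by fun_prop) M (.of_forall fun z ↦ hM _))
  simpa only [mehler, integral_const, probReal_univ, one_smul] using h

lemma norm_le_of_mem_Icc {α : Type*} {f : α → ℝ} {a b : ℝ} (hab : ∀ x, f x ∈ Icc a b) (x : α) :
    ‖f x‖ ≤ max |a| |b| :=
  abs_le_max_abs_abs (hab x).1 (hab x).2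

lemma mehler_mem_Icc {f : E → ℝ} {a b : ℝ} (hf : Continuous f) (hab : ∀ x, f x ∈ Icc a b)
    (θ : ℝ) (x : E) : mehler f θ x ∈ Icc a b :=
  (convex_Icc a b).integral_mem isClosed_Icc (.of_forall fun _ ↦ hab _)
    (integrable_comp_cos_smul_add_sin_smul hf (norm_le_of_mem_Icc hab) θ x)

lemma hasFDerivAt_mehler {f : E → F} {M C : ℝ} (hf : ContDiff ℝ 1 f) (hM : ∀ x, ‖f x‖ ≤ M)
    (hC : ∀ x, ‖fderiv ℝ f x‖ ≤ C) (θ : ℝ) (x : E) :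
    HasFDerivAt (mehler f θ) (cos θ • mehler (fderiv ℝ f) θ x) x := by
  have hcont : Continuous f := hf.continuous
  rw [mehler, ← integral_smul]
  refine hasFDerivAt_integral_of_dominated_of_fderiv_le
    (F' := fun x y ↦ cos θ • fderiv ℝ f (cos θ • x + sin θ • y)) (bound := fun _ ↦ C)
    Filter.univ_mem
    (.of_forall fun x ↦ by fun_prop) (integrable_comp_cos_smul_add_sin_smul hcont hM θ x)
    (Continuous.aestronglyMeasurable (by fun_prop)) (.of_forall fun y x _ ↦ ?_)
    (integrable_const _) (.of_forall fun y x _ ↦ ?_)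
  · rw [norm_smul]
    exact (mul_le_of_le_one_left (norm_nonneg _) (abs_cos_le_one θ)).trans (hC _)
  · have hinner : HasFDerivAt (fun x : E ↦ cos θ • x + sin θ • y)
        (cos θ • ContinuousLinearMap.id ℝ E) x :=
      ((hasFDerivAt_id x).const_smul (cos θ)).add_const _
    simpa [Function.comp_def] using (hf.differentiable one_ne_zero _).hasFDerivAt.comp x hinner

lemma contDiff_mehler {f : E → F} {M C : ℝ} (hf : ContDiff ℝ 1 f) (hM : ∀ x, ‖f x‖ ≤ M)
    (hC : ∀ x, ‖fderiv ℝ f x‖ ≤ C) (θ : ℝ) : ContDiff ℝ 1 (mehler f θ) :=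
  contDiff_one_iff_hasFDerivAt.2 ⟨fun x ↦ cos θ • mehler (fderiv ℝ f) θ x,
    (continuous_mehler (hf.continuous_fderiv one_ne_zero) hC θ).fun_const_smul _,
    hasFDerivAt_mehler hf hM hC θ⟩

variable {f g : E → ℝ} {M C K L : ℝ}

lemma gradient_mehler (hf : ContDiff ℝ 1 f) (hM : ∀ x, ‖f x‖ ≤ M) (hC : ∀ x, ‖∇ f x‖ ≤ C)
    (θ : ℝ) (x : E) : ∇ (mehler f θ) x = cos θ • mehler (∇ f) θ x := by
  have hC' : ∀ x, ‖fderiv ℝ f x‖ ≤ C := by simpa only [norm_gradient] using hC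
  refine ext_inner_right ℝ fun v ↦ ?_
  rw [inner_gradient_left, (hasFDerivAt_mehler hf hM hC' θ x).fderiv, inner_smul_left, mehler,
    mehler, smul_apply, ContinuousLinearMap.integral_apply
      (integrable_comp_cos_smul_add_sin_smul (hf.continuous_fderiv one_ne_zero) hC' θ x),
    real_inner_comm, ← integral_inner
      (integrable_comp_cos_smul_add_sin_smul (continuous_gradient hf) hC θ x)]
  simp only [inner_gradient_right, conj_trivial, smul_eq_mul]

lemma hasDerivAt_mehler (hf : ContDiff ℝ 1 f) (hM : ∀ x, ‖f x‖ ≤ M) (hC : ∀ x, ‖∇ f x‖ ≤ C)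
    (θ : ℝ) (x : E) :
    HasDerivAt (fun θ ↦ mehler f θ x)
      (∫ y, ⟪∇ f (cos θ • x + sin θ • y), -sin θ • x + cos θ • y⟫ ∂stdGaussian E) θ := by
  have hcont : Continuous f := hf.continuous
  have hcont' : Continuous (∇ f) := continuous_gradient hf
  have hC0 : 0 ≤ C := (norm_nonneg _).trans (hC 0)
  refine (hasDerivAt_integral_of_dominated_loc_of_deriv_le
    (F' := fun θ y ↦ ⟪∇ f (cos θ • x + sin θ • y), -sin θ • x + cos θ • y⟫)
    (bound := fun y ↦ C * (‖x‖ + ‖y‖)) Filter.univ_mem (.of_forall fun θ ↦ by fun_prop)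
    (integrable_comp_cos_smul_add_sin_smul hcont hM θ x)
    (Continuous.aestronglyMeasurable (by fun_prop)) (.of_forall fun y θ _ ↦ ?_)
    (((integrable_const _).add integrable_norm_stdGaussian).const_mul C)
    (.of_forall fun y θ _ ↦ ?_)).2
  · refine (norm_inner_le_norm _ _).trans ?_
    gcongr
    · exact hC _
    · exact norm_neg_sin_smul_add_cos_smul_le _ _ _
  · have hrot : HasDerivAt (fun θ ↦ cos θ • x + sin θ • y) (-sin θ • x + cos θ • y) θ :=
      ((hasDerivAt_cos θ).smul_const x).add ((hasDerivAt_sin θ).smul_const y)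
    rw [inner_gradient_left]
    exact (hf.differentiable one_ne_zero _).hasFDerivAt.comp_hasDerivAt θ hrot

lemma norm_deriv_mehler_le (hf : ContDiff ℝ 1 f) (hM : ∀ x, ‖f x‖ ≤ M) (hC : ∀ x, ‖∇ f x‖ ≤ C)
    (θ : ℝ) (x : E) :
    ‖deriv (fun θ ↦ mehler f θ x) θ‖ ≤ C * (‖x‖ + ∫ y, ‖y‖ ∂stdGaussian E) := by
  have hC0 : 0 ≤ C := (norm_nonneg _).trans (hC 0)
  have hbound : Integrable (fun y : E ↦ C * (‖x‖ + ‖y‖)) (stdGaussian E) :=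
    ((integrable_const _).add integrable_norm_stdGaussian).const_mul C
  rw [(hasDerivAt_mehler hf hM hC θ x).deriv]
  refine (norm_integral_le_of_norm_le hbound (.of_forall fun y ↦ ?_)).trans_eq ?_
  · refine (norm_inner_le_norm _ _).trans ?_
    gcongr
    · exact hC _
    · exact norm_neg_sin_smul_add_cos_smul_le _ _ _
  · rw [integral_const_mul, integral_add (integrable_const _) integrable_norm_stdGaussian]
    simp

lemma aestronglyMeasurable_deriv_mehler (hf : ContDiff ℝ 1 f) (hM : ∀ x, ‖f x‖ ≤ M)
    (hC : ∀ x, ‖∇ f x‖ ≤ C) (θ : ℝ) :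
    AEStronglyMeasurable (fun x ↦ deriv (fun θ ↦ mehler f θ x) θ) (stdGaussian E) := by
  have hcont : Continuous (∇ f) := continuous_gradient hf
  have hjoint : Continuous fun z : E × E ↦
      ⟪∇ f (cos θ • z.1 + sin θ • z.2), -sin θ • z.1 + cos θ • z.2⟫ := by
    fun_prop
  simp only [(hasDerivAt_mehler hf hM hC θ _).deriv]
  exact hjoint.stronglyMeasurable.integral_prod_right'.aestronglyMeasurable

lemma integral_comp_add_smul_mul_inner (hg : ContDiff ℝ 1 g) (hK : ∀ x, ‖g x‖ ≤ K)
    (hL : ∀ x, ‖∇ g x‖ ≤ L) (w p : E) (s : ℝ) :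
    ∫ v, g (w + s • v) * ⟪p, v⟫ ∂stdGaussian E =
      s * ∫ v, ⟪∇ g (w + s • v), p⟫ ∂stdGaussian E := by
  have hcont : Continuous g := hg.continuous
  have hcont' : Continuous (∇ g) := continuous_gradient hg
  rw [← integral_const_mul]
  refine integral_mul_inner_stdGaussian (fun v ↦ ?_)
    (.of_bound (by fun_prop) K (.of_forall fun v ↦ hK _))
    (.const_mul (.of_bound (by fun_prop) (L * ‖p‖) (.of_forall fun v ↦ ?_)) s)
    ((IsGaussian.integrable_id.const_inner p).bdd_mul (by fun_prop) (.of_forall fun v ↦ hK _))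
  · have hdiff : DifferentiableAt ℝ (fun v ↦ g (w + s • v)) v :=
      (hg.comp (by fun_prop)).differentiable one_ne_zero v
    have h := hdiff.hasFDerivAt.hasLineDerivAt p
    rwa [← inner_gradient_left, gradient_comp_const_add_smul, real_inner_smul_left] at h
  · refine (norm_inner_le_norm _ _).trans ?_
    gcongr
    exact hL _

/- Rotating the pair of Gaussian variables by `θ` turns the `θ`-derivative of `f` into `∇ f u`
paired with the second variable alone, so integration by parts never differentiates `∇ f`. -/
lemma integral_mul_deriv_mehler (hf : ContDiff ℝ 1 f) (hM : ∀ x, ‖f x‖ ≤ M)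
    (hC : ∀ x, ‖∇ f x‖ ≤ C) (hg : ContDiff ℝ 1 g) (hK : ∀ x, ‖g x‖ ≤ K)
    (hL : ∀ x, ‖∇ g x‖ ≤ L) (θ : ℝ) :
    ∫ x, g x * deriv (fun θ ↦ mehler f θ x) θ ∂stdGaussian E =
      -sin θ * ∫ x, ⟪∇ g x, mehler (∇ f) θ x⟫ ∂stdGaussian E := by
  have hgc : Continuous g := hg.continuous
  have hfc' : Continuous (∇ f) := continuous_gradient hf
  have hgc' : Continuous (∇ g) := continuous_gradient hg
  set γ := stdGaussian E
  let G (u v : E) : ℝ := g (cos θ • u + -sin θ • v) * ⟪∇ f u, v⟫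
  let H (u v : E) : ℝ := ⟪∇ g (cos θ • u + -sin θ • v), ∇ f u⟫
  have hG : Integrable (fun z : E × E ↦ G z.1 z.2) (γ.prod γ) := by
    have hinner : Integrable (fun z : E × E ↦ ⟪∇ f z.1, z.2⟫) (γ.prod γ) := by
      refine ((integrable_norm_stdGaussian.comp_snd γ).const_mul C).mono' (by fun_prop)
        (.of_forall fun z ↦ (norm_inner_le_norm _ _).trans ?_)
      gcongr
      exact hC _
    exact hinner.bdd_mul (Continuous.aestronglyMeasurable (by fun_prop)) (.of_forall fun z ↦ hK _)
  have hH : Integrable (fun z : E × E ↦ H z.1 z.2) (γ.prod γ) := by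
    refine .of_bound (by fun_prop) (L * C) (.of_forall fun z ↦ (norm_inner_le_norm _ _).trans ?_)
    gcongr
    · exact (norm_nonneg _).trans (hL 0)
    · exact hL _
    · exact hC _
  calc ∫ x, g x * deriv (fun θ ↦ mehler f θ x) θ ∂γ
      = ∫ x, ∫ y, G (cos θ • x + sin θ • y) (-sin θ • x + cos θ • y) ∂γ ∂γ := by
        simp only [G, cos_smul_add_neg_sin_smul_rotation, integral_const_mul,
          (hasDerivAt_mehler hf hM hC θ _).deriv, γ]
    _ = ∫ u, ∫ v, G u v ∂γ ∂γ := integral_integral_comp_rotation (by simp [γ]) θ hG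
    _ = -sin θ * ∫ u, ∫ v, H u v ∂γ ∂γ := by
        simp only [G, H, γ, integral_comp_add_smul_mul_inner hg hK hL, integral_const_mul]
    _ = -sin θ * ∫ x, ∫ y, H (cos θ • x + sin θ • y) (-sin θ • x + cos θ • y) ∂γ ∂γ := by
        rw [integral_integral_comp_rotation (by simp [γ]) θ hH]
    _ = -sin θ * ∫ x, ⟪∇ g x, mehler (∇ f) θ x⟫ ∂γ := by
        simp only [H, cos_smul_add_neg_sin_smul_rotation, mehler,
          integral_inner (integrable_comp_cos_smul_add_sin_smul hfc' hC θ _), γ]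

variable {φ : ℝ → ℝ} {a b : ℝ}

lemma hasDerivAt_integral_comp_mehler (hf : ContDiff ℝ 1 f) (hab : ∀ x, f x ∈ Icc a b)
    (hC : ∀ x, ‖∇ f x‖ ≤ C) (hφ : ∀ u ∈ Icc a b, ContDiffAt ℝ 1 φ u) (θ : ℝ) :
    HasDerivAt (fun θ ↦ ∫ x, φ (mehler f θ x) ∂stdGaussian E)
      (∫ x, deriv φ (mehler f θ x) * deriv (fun θ ↦ mehler f θ x) θ ∂stdGaussian E) θ := by
  have hM := norm_le_of_mem_Icc hab
  have hmem (θ : ℝ) (x : E) := mehler_mem_Icc hf.continuous hab θ x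
  have hcont : ContinuousOn φ (Icc a b) := fun u hu ↦ (hφ u hu).continuousAt.continuousWithinAt
  have hcont' : ContinuousOn (deriv φ) (Icc a b) := fun u hu ↦
    ((hφ u hu).derivWithin (m := 0) le_rfl).continuousAt.continuousWithinAt
  have hcomp (ψ : ℝ → ℝ) (hψ : ContinuousOn ψ (Icc a b)) (θ : ℝ) :
      AEStronglyMeasurable (fun x ↦ ψ (mehler f θ x)) (stdGaussian E) :=
    (hψ.comp_continuous (continuous_mehler hf.continuous hM θ) (hmem θ)).aestronglyMeasurable
  obtain ⟨B, hB⟩ := isCompact_Icc.exists_bound_of_continuousOn hcont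
  obtain ⟨B', hB'⟩ := isCompact_Icc.exists_bound_of_continuousOn hcont'
  refine (hasDerivAt_integral_of_dominated_loc_of_deriv_le
    (F' := fun θ x ↦ deriv φ (mehler f θ x) * deriv (fun θ ↦ mehler f θ x) θ)
    (bound := fun x ↦ B' * (C * (‖x‖ + ∫ y, ‖y‖ ∂stdGaussian E))) Filter.univ_mem
    (.of_forall (hcomp φ hcont))
    (.of_bound (hcomp φ hcont θ) B (.of_forall fun x ↦ hB _ (hmem θ x)))
    ((hcomp _ hcont' θ).mul (aestronglyMeasurable_deriv_mehler hf hM hC θ))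
    (.of_forall fun x θ _ ↦ ?_)
    (((integrable_norm_stdGaussian.add (integrable_const _)).const_mul C).const_mul B')
    (.of_forall fun x θ _ ↦ ?_)).2
  · exact norm_mul_le_of_le (hB' _ (hmem θ x)) (norm_deriv_mehler_le hf hM hC θ x)
  · have hmehler := (hasDerivAt_mehler hf hM hC θ x).differentiableAt.hasDerivAt
    exact ((hφ _ (hmem θ x)).differentiableAt one_ne_zero).hasDerivAt.comp θ hmehler

lemma hasDerivAt_phiEntropy_mehler (hf : ContDiff ℝ 1 f)
    (hab : ∀ x, f x ∈ Icc a b) (hC : ∀ x, ‖∇ f x‖ ≤ C)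
    (hφ : ∀ u ∈ Icc a b, ContDiffAt ℝ 2 φ u) (θ : ℝ) :
    HasDerivAt (fun θ ↦ ∫ x, φ (mehler f θ x) ∂stdGaussian E)
      (-(sin θ * cos θ) *
        ∫ x, deriv^[2] φ (mehler f θ x) * ‖mehler (∇ f) θ x‖ ^ 2 ∂stdGaussian E) θ := by
  have hM := norm_le_of_mem_Icc hab
  have hmem := mehler_mem_Icc hf.continuous hab θ
  have hmehler : ContDiff ℝ 1 (mehler f θ) :=
    contDiff_mehler hf hM (by simpa only [norm_gradient] using hC) θ
  have hφ' : ∀ u ∈ Icc a b, ContDiffAt ℝ 1 (deriv φ) u := fun u hu ↦ (hφ u hu).derivWithin le_rfl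
  have hcont' : ContinuousOn (deriv φ) (Icc a b) := fun u hu ↦
    (hφ' u hu).continuousAt.continuousWithinAt
  have hcont'' : ContinuousOn (deriv (deriv φ)) (Icc a b) := fun u hu ↦
    ((hφ' u hu).derivWithin (m := 0) le_rfl).continuousAt.continuousWithinAt
  obtain ⟨B', hB'⟩ := isCompact_Icc.exists_bound_of_continuousOn hcont'
  obtain ⟨B'', hB''⟩ := isCompact_Icc.exists_bound_of_continuousOn hcont''
  let g (x : E) : ℝ := deriv φ (mehler f θ x)
  have hg : ContDiff ℝ 1 g := contDiff_iff_contDiffAt.2 fun x ↦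
    (hφ' _ (hmem x)).comp x hmehler.contDiffAt
  have hgrad (x : E) : ∇ g x = deriv^[2] φ (mehler f θ x) • cos θ • mehler (∇ f) θ x := by
    rw [gradient_comp_real ((hφ' _ (hmem x)).differentiableAt one_ne_zero)
      (hmehler.differentiable one_ne_zero x), gradient_mehler hf hM hC]
    rfl
  have hgrad_le (x : E) : ‖∇ g x‖ ≤ B'' * C := by
    rw [hgrad, norm_smul]
    have hle : ‖cos θ • mehler (∇ f) θ x‖ ≤ C := by
      rw [norm_smul]
      exact (mul_le_of_le_one_left (norm_nonneg _) (abs_cos_le_one θ)).trans (norm_mehler_le hC θ x)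
    exact mul_le_mul (hB'' _ (hmem x)) hle (norm_nonneg _) ((norm_nonneg _).trans (hB'' _ (hmem x)))
  refine (hasDerivAt_integral_comp_mehler hf hab hC (fun u hu ↦ (hφ u hu).of_le one_le_two)
    θ).congr_deriv ?_
  rw [integral_mul_deriv_mehler hf hM hC hg (fun x ↦ hB' _ (hmem x)) hgrad_le,
    ← integral_const_mul, ← integral_const_mul]
  congr with x
  rw [hgrad, real_inner_smul_left, real_inner_smul_left, real_inner_self_eq_norm_sq]
  ring

lemma hasDerivAt_integral_mehler_mul_log (hf : ContDiff ℝ 1 f) (ha : 0 < a)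
    (hab : ∀ x, f x ∈ Icc a b) (hC : ∀ x, ‖∇ f x‖ ≤ C) (θ : ℝ) :
    HasDerivAt (fun θ ↦ ∫ x, mehler f θ x * log (mehler f θ x) ∂stdGaussian E)
      (-(sin θ * cos θ) * ∫ x, ‖mehler (∇ f) θ x‖ ^ 2 / mehler f θ x ∂stdGaussian E) θ := by
  have hφ : ∀ u ∈ Icc a b, ContDiffAt ℝ 2 (fun u ↦ u * log u) u := fun u hu ↦
    contDiffAt_id.mul (contDiffAt_log.2 (ha.trans_le hu.1).ne')
  simpa only [deriv2_mul_log, inv_mul_eq_div] using hasDerivAt_phiEntropy_mehler hf hab hC hφ θ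

lemma integral_norm_mehler_gradient_sq_div_le (hf : ContDiff ℝ 1 f) (ha : 0 < a)
    (hab : ∀ x, f x ∈ Icc a b) (hC : ∀ x, ‖∇ f x‖ ≤ C) (θ : ℝ) :
    ∫ x, ‖mehler (∇ f) θ x‖ ^ 2 / mehler f θ x ∂stdGaussian E ≤
      ∫ x, ‖∇ f x‖ ^ 2 / f x ∂stdGaussian E := by
  have hcont := hf.continuous
  have hcont' := continuous_gradient hf
  have hpos (x : E) : 0 < f x := ha.trans_le (hab x).1
  have hquot : Continuous fun x ↦ ‖∇ f x‖ ^ 2 / f x := (hcont'.norm.pow 2).div hcont fun x ↦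
    (hpos x).ne'
  have hquot_le (x : E) : ‖‖∇ f x‖ ^ 2 / f x‖ ≤ C ^ 2 / a := by
    rw [norm_of_nonneg (by have := hpos x; positivity)]
    gcongr
    · exact hC x
    · exact (hab x).1
  rw [← integral_mehler hquot hquot_le θ]
  refine integral_mono_of_nonneg (.of_forall fun x ↦ ?_)
    (.of_bound (continuous_mehler hquot hquot_le θ).aestronglyMeasurable _
      (.of_forall (norm_mehler_le hquot_le θ))) (.of_forall fun x ↦ ?_)
  · have := ha.trans_le (mehler_mem_Icc hcont hab θ x).1
    simp only [Pi.zero_apply]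
    positivity
  · exact norm_integral_sq_div_integral_le
      (integrable_comp_cos_smul_add_sin_smul hcont (norm_le_of_mem_Icc hab) θ x)
      (.of_forall fun _ ↦ hpos _) (integrable_comp_cos_smul_add_sin_smul hcont' hC θ x)
      (integrable_comp_cos_smul_add_sin_smul hquot hquot_le θ x)

theorem logSobolev_stdGaussian (hf : ContDiff ℝ 1 f) (ha : 0 < a) (hab : ∀ x, f x ∈ Icc a b)
    (hC : ∀ x, ‖∇ f x‖ ≤ C) :
    ∫ x, f x * log (f x) ∂stdGaussian E -
        (∫ x, f x ∂stdGaussian E) * log (∫ x, f x ∂stdGaussian E) ≤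
      1 / 2 * ∫ x, ‖∇ f x‖ ^ 2 / f x ∂stdGaussian E := by
  set I := ∫ x, ‖∇ f x‖ ^ 2 / f x ∂stdGaussian E
  let J (θ : ℝ) : ℝ := ∫ x, ‖mehler (∇ f) θ x‖ ^ 2 / mehler f θ x ∂stdGaussian E
  let ent (θ : ℝ) : ℝ := ∫ x, mehler f θ x * log (mehler f θ x) ∂stdGaussian E
  have hderiv (θ : ℝ) : HasDerivAt (fun θ ↦ ent θ + sin θ ^ 2 * (I / 2))
      (sin θ * cos θ * (I - J θ)) θ := by
    have hsin_sq := ((hasDerivAt_sin θ).pow 2).mul_const (I / 2)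
    refine ((hasDerivAt_integral_mehler_mul_log hf ha hab hC θ).add hsin_sq).congr_deriv ?_
    push_cast
    ring
  have hmono : MonotoneOn (fun θ ↦ ent θ + sin θ ^ 2 * (I / 2)) (Icc 0 (π / 2)) := by
    refine monotoneOn_of_hasDerivWithinAt_nonneg (convex_Icc _ _)
      (fun θ _ ↦ (hderiv θ).continuousAt.continuousWithinAt)
      (fun θ _ ↦ (hderiv θ).hasDerivWithinAt) fun θ hθ ↦ ?_
    rw [interior_Icc] at hθ
    have hsin := sin_nonneg_of_nonneg_of_le_pi hθ.1.le (by linarith [hθ.2, pi_pos])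
    have hcos := cos_nonneg_of_neg_pi_div_two_le_of_le (by linarith [hθ.1, pi_pos]) hθ.2.le
    exact mul_nonneg (mul_nonneg hsin hcos)
      (sub_nonneg.2 (integral_norm_mehler_gradient_sq_div_le hf ha hab hC θ))
  have hent_zero : ent 0 = ∫ x, f x * log (f x) ∂stdGaussian E := by simp [ent, mehler]
  have hent_pi_div_two :
      ent (π / 2) = (∫ x, f x ∂stdGaussian E) * log (∫ x, f x ∂stdGaussian E) := by
    simp [ent, mehler]
  have hle := hmono (left_mem_Icc.2 (by positivity)) (right_mem_Icc.2 (by positivity))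
    (by positivity : 0 ≤ π / 2)
  simp only [sin_zero, sin_pi_div_two, hent_zero, hent_pi_div_two] at hle
  linarith

end Mehler

theorem local_logSobolev_heat_general {n : ℕ} {f : EuclideanSpace ℝ (Fin n) → ℝ} {a b C t : ℝ}
    (hf : ContDiff ℝ 1 f) (ha : 0 < a) (hab : ∀ x, f x ∈ Icc a b) (hgrad : ∀ x, ‖∇ f x‖ ≤ C)
    (ht : 0 < t) (x : EuclideanSpace ℝ (Fin n)) :
    heat n t (fun y ↦ f y * log (f y)) x - heat n t f x * log (heat n t f x) ≤
      t * heat n t (fun y ↦ ‖∇ f y‖ ^ 2 / f y) x := by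
  set s := √(2 * t)
  have hs : s ^ 2 = 2 * t := sq_sqrt (by positivity)
  have hgrad_le (z : EuclideanSpace ℝ (Fin n)) : ‖∇ (fun z ↦ f (x + s • z)) z‖ ≤ s * C := by
    rw [gradient_comp_const_add_smul, norm_smul, norm_of_nonneg (sqrt_nonneg _)]
    exact mul_le_mul_of_nonneg_left (hgrad _) (sqrt_nonneg _)
  have gaussian := logSobolev_stdGaussian (f := fun z ↦ f (x + s • z)) (hf.comp (by fun_prop)) ha
    (fun z ↦ hab (x + s • z)) hgrad_le
  simp only [heat_eq_integral_stdGaussian ht]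
  refine gaussian.trans_eq ?_
  simp only [gradient_comp_const_add_smul, norm_smul, mul_pow, norm_eq_abs, sq_abs, hs,
    mul_div_assoc, integral_const_mul]
  ring

theorem local_logSobolev_heat (n : ℕ) (hn : 1 ≤ n)
    (f : EuclideanSpace ℝ (Fin n) → ℝ) (hf : ContDiff ℝ (⊤ : ℕ∞) f)
    (a b : ℝ) (ha : 0 < a) (hab : ∀ x, a ≤ f x ∧ f x ≤ b)
    (C : ℝ) (hgrad : ∀ x, ‖gradient f x‖ ≤ C)
    (t : ℝ) (ht : 0 < t) (x : EuclideanSpace ℝ (Fin n)) :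
    heat n t (fun y => f y * Real.log (f y)) x - heat n t f x * Real.log (heat n t f x) ≤
      t * heat n t (fun y => ‖gradient f y‖ ^ 2 / f y) x :=
  local_logSobolev_heat_general (hf.of_le (mod_cast le_top)) ha hab hgrad ht x
end
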